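/- Let $a$, $b$, $c$ be distinct primes with $a < b$, and suppose the equation $a^x + b^y = c^z$ has more than one solution in positive integers $(x,y,z)$. If $(a,b,c)$ is not one of $(2,3,5)$, $(2,3,11)$, $(2,5,3)$, $(2,7,3)$, $(3,5,2)$, $(3,13,2)$, then $c \equiv 5 \pmod{12}$ and the equation has exactly two solutions $(x_1,y_1,z_1)$ and $(x_2,y_2,z_2)$, which satisfy $2 \mid x_1$, $2 \mid y_1$, $z_1 = 1$, and $2 \nmid y_2$. -/

import Mathlib

/-- Coefficients of odd powers: `(s+t)^(2m+1) = s * S + t * T` with `s^2 = A`, `t^2 = -B`. -/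
def STq (A B : ℤ) : ℕ → ℤ × ℤ
  | 0 => (1, 1)
  | m + 1 => ((A - B) * (STq A B m).1 - 2 * B * (STq A B m).2,
      (A - B) * (STq A B m).2 + 2 * A * (STq A B m).1)

theorem ST_swap (A B : ℤ) (m : ℕ) :
    (STq B A m).1 = (-1) ^ m * (STq A B m).2 ∧ (STq B A m).2 = (-1) ^ m * (STq A B m).1 := by
  induction m with
  | zero => simp [STq]
  | succ m ih =>
    obtain ⟨h1, h2⟩ := ih
    simp only [STq, h1, h2, pow_succ]
    constructor <;> ring

theorem ST_congr1 (A B : ℤ) (m : ℕ) :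
    (∃ k, (STq A B m).1 = (2 * m + 1) * (-B) ^ m + A * k) ∧
    (∃ k, (STq A B m).2 = (-B) ^ m + A * k) := by
  induction m with
  | zero => exact ⟨⟨0, by simp [STq]⟩, ⟨0, by simp [STq]⟩⟩
  | succ m ih =>
    obtain ⟨⟨k, hk⟩, ⟨l, hl⟩⟩ := ih
    simp only [STq, hk, hl, pow_succ]
    push_cast
    refine ⟨⟨(2 * m + 1) * (-B) ^ m + A * k - B * k - 2 * B * l, by ring⟩,
      ⟨(-B) ^ m + A * l - B * l + 2 * ((2 * m + 1) * (-B) ^ m + A * k), by ring⟩⟩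

theorem ST_congr2 (A B : ℤ) (m : ℕ) :
    (∃ k, 3 * (-B) * (STq A B m).1 = 3 * (2 * m + 1) * (-B) ^ (m + 1)
      + (2 * m + 1) * m * (2 * m - 1) * A * (-B) ^ m + A ^ 2 * k) ∧
    (∃ k, (-B) * (STq A B m).2 = (-B) ^ (m + 1) + (2 * m + 1) * m * A * (-B) ^ m + A ^ 2 * k) := by
  induction m with
  | zero => exact ⟨⟨0, by simp [STq]⟩, ⟨0, by simp [STq]⟩⟩
  | succ m ih =>
    obtain ⟨⟨k, hk⟩, ⟨l, hl⟩⟩ := ih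
    obtain ⟨j, hj⟩ := (ST_congr1 A B m).1
    simp only [STq]
    push_cast
    refine ⟨⟨3 * ((2 * m + 1) * 0) + (A - B) * k - 6 * B * l
      + ((2 * m + 1) * m * (2 * m - 1)) * (-B) ^ m, ?_⟩,
      ⟨(A - B) * l + (2 * m + 1) * m * (-B) ^ m - 2 * B * j, ?_⟩⟩
    · linear_combination (A - B) * hk - 6 * B * hl
    · rw [hj]
      linear_combination (A - B) * hl

theorem ST_int (A B h e N : ℤ) (he : h * e = 2) (hN : A + B = h ^ 2 * N) (m : ℕ) :
    ∃ P Q R : ℤ, (STq A B m).1 = h ^ (2 * m) * P ∧ (STq A B m).2 = h ^ (2 * m) * Q ∧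
      P + Q = h * R := by
  induction m with
  | zero => exact ⟨1, 1, e, by simp [STq], by simp [STq], by linarith⟩
  | succ m ih =>
    obtain ⟨P, Q, R, h1, h2, h3⟩ := ih
    have hA : A = h ^ 2 * N - B := by linarith
    refine ⟨N * P - e * B * R, e * A * R - N * Q, N * R - e * N * Q + 2 * N * R - e ^ 2 * B * R,
      ?_, ?_, ?_⟩
    · simp only [STq, h1, h2]
      rw [show 2 * (m + 1) = 2 * m + 2 by ring, pow_add]
      subst hA
      linear_combination (-2 * B * h ^ (2 * m)) * h3 + h^(2*m) * B * R * h * he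
    · simp only [STq, h1, h2]
      rw [show 2 * (m + 1) = 2 * m + 2 by ring, pow_add]
      have hB : B = h ^ 2 * N - A := by linarith
      subst hB
      linear_combination (2 * A * h ^ (2 * m)) * h3 - h^(2*m) * A * R * h * he
    · subst hA
      linear_combination N * h3 + (h*N*R + N*Q + e*B*R) * he

theorem ST_pow (s t : ℂ) (a b u v : ℤ) (hs : s ^ 2 = a) (ht : t ^ 2 = -b) (m : ℕ) :
    (u * s + v * t) ^ (2 * m + 1) =
      u * ((STq (a * u ^ 2) (b * v ^ 2) m).1 : ℤ) * s + v * ((STq (a * u ^ 2) (b * v ^ 2) m).2 : ℤ) * t := by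
  induction m with
  | zero => simp [STq]
  | succ m ih =>
    rw [show 2 * (m + 1) + 1 = (2 * m + 1) + 2 by ring, pow_add, ih]
    simp only [STq]
    push_cast
    generalize ((STq (a * u ^ 2) (b * v ^ 2) m).1 : ℂ) = S
    generalize ((STq (a * u ^ 2) (b * v ^ 2) m).2 : ℂ) = T
    rw [← hs, show (b : ℂ) = - t ^ 2 by rw [ht]; ring]
    ring

theorem ST_norm (A B : ℤ) (m : ℕ) :
    A * (STq A B m).1 ^ 2 + B * (STq A B m).2 ^ 2 = (A + B) ^ (2 * m + 1) := by
  induction m with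
  | zero => simp [STq]
  | succ m ih =>
    rw [show 2 * (m + 1) + 1 = (2 * m + 1) + 2 by ring, pow_add, ← ih]
    simp only [STq]
    ring

structure Cfg (a b c h e : ℤ) (G : ℕ → Prop) : Prop where
  ha : 0 < a
  hb : 0 < b
  hc : Prime c
  hc0 : 0 < c
  hca : ¬ c ∣ a
  hcb : ¬ c ∣ b
  hh : 0 < h
  he : h * e = 2
  hce : ¬ c ∣ e
  mode : h = 1 ∨ (h = 2 ∧ e = 1 ∧ c = 2)
  hab : h ^ 2 < a * b
  good1 : ∀ n k m, G n → n = k + 2 * m → G k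
  good2 : ∀ n k m, G n → 2 * m = n + k → G k
  good0 : ∀ u v : ℤ, G 0 → a * u ^ 2 + b * v ^ 2 ≠ h ^ 2

theorem Cfg.prim {a b c h e : ℤ} {G : ℕ → Prop} (C : Cfg a b c h e G) {n : ℕ} {u v : ℤ}
    (hn : 0 < n) (hel : a * u ^ 2 + b * v ^ 2 = h ^ 2 * c ^ n) : c ∣ u ↔ c ∣ v := by
  have h1 : c ∣ a * u ^ 2 + b * v ^ 2 := by
    rw [hel]; exact Dvd.dvd.mul_left (dvd_pow_self c hn.ne') _
  constructor
  · intro h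
    have h2 : c ∣ a * u ^ 2 := Dvd.dvd.mul_left (dvd_pow h two_ne_zero) _
    have h3 := (dvd_add_right h2).1 h1
    exact C.hc.dvd_of_dvd_pow ((C.hc.dvd_or_dvd h3).resolve_left C.hcb)
  · intro h
    have h2 : c ∣ b * v ^ 2 := Dvd.dvd.mul_left (dvd_pow h two_ne_zero) _
    have h3 := (dvd_add_left h2).1 h1
    exact C.hc.dvd_of_dvd_pow ((C.hc.dvd_or_dvd h3).resolve_left C.hca)

theorem sq_two_aux (b v : ℤ) (hb : ¬ (2:ℤ) ∣ b) (h : b * v ^ 2 = 2) : False := by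
  rcases Int.even_or_odd' v with ⟨k, hk | hk⟩
  · subst hk
    have : 2 * (b * k ^ 2) = 1 := by linarith
    omega
  · subst hk
    apply hb
    exact ⟨1 - b * (2 * k ^ 2 + 2 * k), by linarith⟩

theorem Cfg.descend {a b c h e : ℤ} {G : ℕ → Prop} (C : Cfg a b c h e G) {n : ℕ} {u v : ℤ}
    (hn : 0 < n) (hel : a * u ^ 2 + b * v ^ 2 = h ^ 2 * c ^ n) (hu : c ∣ u) :
    ∃ u' v' m, u = c * u' ∧ v = c * v' ∧ n = m + 2 ∧ a * u' ^ 2 + b * v' ^ 2 = h ^ 2 * c ^ m := by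
  obtain ⟨v', hv'⟩ := (C.prim hn hel).1 hu
  obtain ⟨u', hu'⟩ := hu
  have hc0 := C.hc0
  rcases Nat.lt_or_ge n 2 with h2 | h2
  · exfalso
    have : n = 1 := by omega
    subst this
    have h3 : c * (a * u' ^ 2 + b * v' ^ 2) = h ^ 2 := by
      apply mul_left_cancel₀ hc0.ne'
      rw [hu', hv'] at hel
      linarith
    rcases C.mode with h1 | ⟨h1, h4, h5⟩
    · rw [h1] at h3
      exact C.hc.not_isUnit (isUnit_of_dvd_one ⟨a * u' ^ 2 + b * v' ^ 2, by linarith⟩)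
    · rw [h1, h5] at h3
      have h6 : a * u' ^ 2 + b * v' ^ 2 = 2 := by linarith
      have ha := C.ha
      have hb := C.hb
      have hab := C.hab
      have hca := C.hca
      have hcb := C.hcb
      rw [h5] at hca hcb
      rw [h1] at hab
      by_cases hu0 : u' = 0
      · subst hu0
        exact sq_two_aux b v' hcb (by linarith)
      by_cases hv0 : v' = 0
      · subst hv0
        exact sq_two_aux a u' hca (by linarith)
      have : 0 < u' ^ 2 := by positivity
      have : 0 < v' ^ 2 := by positivity
      have h7 : a ≤ 1 := by nlinarith
      have h8 : b ≤ 1 := by nlinarith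
      nlinarith
  · obtain ⟨m, rfl⟩ := Nat.exists_eq_add_of_le' h2
    refine ⟨u', v', m, hu', hv', rfl, ?_⟩
    rw [hu', hv'] at hel
    have : c ^ 2 ≠ 0 := by positivity
    apply mul_left_cancel₀ this
    rw [pow_add] at hel
    linarith

theorem Cfg.sign {a b c h e : ℤ} {G : ℕ → Prop} (C : Cfg a b c h e G) {m n : ℕ} {u1 v1 u2 v2 : ℤ}
    (hmn : m ≤ n) (hm : 0 < m)
    (h1 : a * u1 ^ 2 + b * v1 ^ 2 = h ^ 2 * c ^ m) (h2 : a * u2 ^ 2 + b * v2 ^ 2 = h ^ 2 * c ^ n)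
    (hp1 : ¬ c ∣ u1) (hp2 : ¬ c ∣ u2) :
    ∃ v1' y, v1' ^ 2 = v1 ^ 2 ∧ u1 * v2 - u2 * v1' = h * c ^ m * y := by
  have hq1 : ¬ c ∣ v1 := by rwa [← C.prim hm h1]
  have hq2 : ¬ c ∣ v2 := by rwa [← C.prim (by omega) h2]
  have hh := C.hh
  obtain ⟨X, Y, hX, hY⟩ : ∃ X Y, u1 * v2 - u2 * v1 = h * X ∧ u1 * v2 + u2 * v1 = h * Y := by
    rcases C.mode with h1 | ⟨h1, h4, h5⟩
    · exact ⟨u1 * v2 - u2 * v1, u1 * v2 + u2 * v1, by rw [h1]; ring, by rw [h1]; ring⟩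
    · rw [h5] at hp1 hp2 hq1 hq2
      rw [← even_iff_two_dvd, Int.not_even_iff_odd] at *
      rw [h1]
      obtain ⟨X, hX⟩ := (hp1.mul hq2).sub_odd (hp2.mul hq1)
      obtain ⟨Y, hY⟩ := (hp1.mul hq2).add_odd (hp2.mul hq1)
      exact ⟨X, Y, by linarith, by linarith⟩
  obtain ⟨k, rfl⟩ := Nat.exists_eq_add_of_le hmn
  have hXY : a * (X * Y) = c ^ m * (v2 ^ 2 - c ^ k * v1 ^ 2) := by
    have : h ^ 2 ≠ 0 := by positivity
    apply mul_left_cancel₀ this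
    have : h ^ 2 * (a * (X * Y)) = a * (h * X) * (h * Y) := by ring
    rw [this, ← hX, ← hY]
    rw [pow_add] at h2
    linear_combination v2 ^ 2 * h1 - v1 ^ 2 * h2
  have hs : X + Y = e * (u1 * v2) := by
    apply mul_left_cancel₀ hh.ne'
    linear_combination -hX - hY - u1 * v2 * C.he
  have hcs : ¬ c ∣ X + Y := by
    rw [hs]
    intro hd
    rcases C.hc.dvd_or_dvd hd with hd | hd
    · exact C.hce hd
    · rcases C.hc.dvd_or_dvd hd with hd | hd
      · exact hp1 hd
      · exact hq2 hd
  have hcop : ∀ w : ℤ, ¬ c ∣ w → IsCoprime (c ^ m) w := by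
    intro w hw
    exact IsCoprime.pow_left ((C.hc.irreducible.coprime_iff_not_dvd).2 hw)
  have hd : c ^ m ∣ X * Y := (hcop a C.hca).dvd_of_dvd_mul_left ⟨_, hXY⟩
  by_cases hcX : c ∣ X
  · have hcY : ¬ c ∣ Y := fun hY => hcs (dvd_add hcX hY)
    obtain ⟨y, hy⟩ := (hcop Y hcY).dvd_of_dvd_mul_right hd
    exact ⟨v1, y, rfl, by rw [hX, hy]; ring⟩
  · obtain ⟨y, hy⟩ := (hcop X hcX).dvd_of_dvd_mul_left hd
    exact ⟨-v1, y, by ring, by linear_combination hY + h * hy⟩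

theorem Cfg.step {a b c h e : ℤ} {G : ℕ → Prop} (C : Cfg a b c h e G) {m n k l : ℕ}
    {u1 v1 u2 v2 y : ℤ} (hn : n = m + l) (hkm : k ≤ m) (hkl : k ≤ l)
    (h1 : a * u1 ^ 2 + b * v1 ^ 2 = h ^ 2 * c ^ m) (h2 : a * u2 ^ 2 + b * v2 ^ 2 = h ^ 2 * c ^ n)
    (hp2 : ¬ c ∣ u2) (hy : u1 * v2 - u2 * v1 = h * c ^ m * y) :
    ∃ U V, c ^ k * U = u2 + e * b * v1 * y ∧ c ^ k * V = - v2 + e * a * u1 * y ∧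
      a * U ^ 2 + b * V ^ 2 = h ^ 2 * c ^ (n - 2 * k) := by
  have hc0 := C.hc0
  have hh := C.hh
  have he := C.he
  set U := u2 + e * b * v1 * y with hU
  set V := - v2 + e * a * u1 * y with hV
  have hnorm : a * U ^ 2 + b * V ^ 2 = h ^ 2 * c ^ n := by
    rw [hU, hV]
    linear_combination h2 - 2 * e * a * b * y * hy + e ^ 2 * a * b * y ^ 2 * h1
      + (e * h * c ^ m * y ^ 2 * a * b) * he
  have hkey : v2 ^ 2 = c ^ l * v1 ^ 2 + e * a * y * u2 * v1 + a * c ^ m * y ^ 2 := by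
    have : h ^ 2 * c ^ m ≠ 0 := by positivity
    apply mul_left_cancel₀ this
    rw [hn, pow_add] at h2
    have hA : (u1 * v2) ^ 2 = (u2 * v1 + h * c ^ m * y) ^ 2 := by rw [← hy]; ring
    linear_combination - v2 ^ 2 * h1 + a * hA + v1 ^ 2 * h2 - (h * c ^ m * y * a * u2 * v1) * he
  have hcop : ∀ w : ℤ, ¬ c ∣ w → IsCoprime (c ^ k) w := by
    intro w hw
    exact IsCoprime.pow_left ((C.hc.irreducible.coprime_iff_not_dvd).2 hw)
  have hUd : c ^ k ∣ U := by
    have : a * u2 * U = h ^ 2 * c ^ n - b * (c ^ l * v1 ^ 2) - b * (a * c ^ m * y ^ 2) := by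
      rw [hU]
      linear_combination h2 - b * hkey
    have hd : c ^ k ∣ a * u2 * U := by
      rw [this]
      have e1 : c ^ k ∣ c ^ n := pow_dvd_pow c (by omega)
      have e2 : c ^ k ∣ c ^ l := pow_dvd_pow c (by omega)
      have e3 : c ^ k ∣ c ^ m := pow_dvd_pow c (by omega)
      refine dvd_sub (dvd_sub (e1.mul_left _) ((e2.mul_right _).mul_left _)) ?_
      exact ((e3.mul_left _).mul_right _).mul_left _
    exact ((hcop a C.hca).mul_right (hcop u2 hp2)).dvd_of_dvd_mul_left hd
  have hVd : c ^ k ∣ V := by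
    have e1 : (c ^ k) ^ 2 ∣ c ^ n := by rw [← pow_mul]; exact pow_dvd_pow c (by omega)
    have e2 : (c ^ k) ^ 2 ∣ b * V ^ 2 := by
      have : b * V ^ 2 = h ^ 2 * c ^ n - a * U ^ 2 := by linarith
      rw [this]
      exact dvd_sub (e1.mul_left _) ((pow_dvd_pow_of_dvd hUd 2).mul_left _)
    have e3 := (IsCoprime.pow_left (m := 2) (hcop b C.hcb)).dvd_of_dvd_mul_left e2
    exact (Int.pow_dvd_pow_iff two_ne_zero).1 e3
  obtain ⟨U0, hU0⟩ := hUd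
  obtain ⟨V0, hV0⟩ := hVd
  refine ⟨U0, V0, hU0.symm, hV0.symm, ?_⟩
  have : (c ^ k) ^ 2 ≠ 0 := by positivity
  apply mul_left_cancel₀ this
  rw [hU0, hV0] at hnorm
  have e4 : c ^ n = (c ^ k) ^ 2 * c ^ (n - 2 * k) := by
    rw [← pow_mul, ← pow_add]; congr 1; omega
  rw [e4] at hnorm
  linear_combination hnorm

theorem Cfg.same {a b c h e : ℤ} {G : ℕ → Prop} (C : Cfg a b c h e G) {m : ℕ}
    {u1 v1 u2 v2 y : ℤ}
    (h1 : a * u1 ^ 2 + b * v1 ^ 2 = h ^ 2 * c ^ m) (h2 : a * u2 ^ 2 + b * v2 ^ 2 = h ^ 2 * c ^ m)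
    (hy : u1 * v2 - u2 * v1 = h * c ^ m * y) :
    u2 ^ 2 = u1 ^ 2 ∧ v2 ^ 2 = v1 ^ 2 := by
  have hc0 := C.hc0
  have hh := C.hh
  have hab := C.hab
  have key : (a * u1 * u2 + b * v1 * v2) ^ 2 + a * b * (h * c ^ m * y) ^ 2
      = (h ^ 2 * c ^ m) ^ 2 := by
    rw [← hy]
    linear_combination (h ^ 2 * c ^ m) * h1 + (a * u1 ^ 2 + b * v1 ^ 2) * h2
  have hy0 : y = 0 := by
    by_contra hne
    have h3 : 0 < y ^ 2 := by positivity
    have h5 : 0 < (h * c ^ m) ^ 2 := by positivity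
    have h6 : (h * c ^ m) ^ 2 * (a * b * y ^ 2) ≤ (h * c ^ m) ^ 2 * h ^ 2 := by
      nlinarith [sq_nonneg (a * u1 * u2 + b * v1 * v2)]
    have h7 := le_of_mul_le_mul_left h6 h5
    nlinarith [C.ha, C.hb]
  subst hy0
  have hne : h ^ 2 * c ^ m ≠ 0 := by positivity
  have hx : u1 * v2 = u2 * v1 := by linarith
  have hx2 : (u1 * v2) ^ 2 = (u2 * v1) ^ 2 := by rw [hx]
  constructor
  · apply mul_left_cancel₀ hne
    linear_combination -u2 ^ 2 * h1 + u1 ^ 2 * h2 - b * hx2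
  · apply mul_left_cancel₀ hne
    linear_combination -v2 ^ 2 * h1 + v1 ^ 2 * h2 + a * hx2

theorem exists_st (a b : ℤ) (ha : 0 < a) (hb : 0 < b) : ∃ s t : ℂ, s ^ 2 = a ∧ t ^ 2 = -b ∧
    ∀ u v u' v' : ℤ, u * s + v * t = u' * s + v' * t → u = u' ∧ v = v' := by
  have ha' : (0:ℝ) < a := by exact_mod_cast ha
  have hb' : (0:ℝ) < b := by exact_mod_cast hb
  have sa := Real.sqrt_pos.2 ha'
  have sb := Real.sqrt_pos.2 hb'
  refine ⟨(Real.sqrt a : ℝ), (Real.sqrt b : ℝ) * Complex.I, ?_, ?_, ?_⟩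
  · rw [← Complex.ofReal_pow, Real.sq_sqrt ha'.le]; simp
  · rw [mul_pow, ← Complex.ofReal_pow, Real.sq_sqrt hb'.le, Complex.I_sq]; simp
  · intro u v u' v' h
    have h1 := congrArg Complex.re h
    have h2 := congrArg Complex.im h
    simp at h1 h2
    constructor
    · rcases h1 with h1 | h1
      · exact h1
      · exact absurd h1 (by positivity)
    · rcases h2 with h2 | h2
      · exact h2
      · exact absurd h2 (by positivity)

theorem Cfg.gen {a b c h e : ℤ} {G : ℕ → Prop} (C : Cfg a b c h e G) (s t : ℂ)
    (hs : s ^ 2 = a) (ht : t ^ 2 = -b) {g : ℕ} {u1 v1 : ℤ}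
    (hg : 0 < g) (h1 : a * u1 ^ 2 + b * v1 ^ 2 = h ^ 2 * c ^ g) (hp1 : ¬ c ∣ u1)
    (hmin : ∀ n u v, G n → a * u ^ 2 + b * v ^ 2 = h ^ 2 * c ^ n → g ≤ n) (n : ℕ) :
    ∀ u2 v2 : ℤ, G n → a * u2 ^ 2 + b * v2 ^ 2 = h ^ 2 * c ^ n →
    ∃ (j μ : ℕ) (u v : ℤ), u ^ 2 = u1 ^ 2 ∧ v ^ 2 = v1 ^ 2 ∧
      (h : ℂ) ^ (2 * μ) * (u2 * s + v2 * t) = (c : ℂ) ^ j * (u * s + v * t) ^ (2 * μ + 1) := by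
  have hhc : (h : ℂ) ≠ 0 := by exact_mod_cast C.hh.ne'
  have hcc : (c : ℂ) ≠ 0 := by exact_mod_cast C.hc0.ne'
  induction n using Nat.strong_induction_on with
  | _ n IH =>
  intro u2 v2 hG h2
  have hgn := hmin n u2 v2 hG h2
  by_cases hcu : c ∣ u2
  · obtain ⟨u', v', m, rfl, rfl, rfl, hm⟩ := C.descend (by omega) h2 hcu
    obtain ⟨j, μ, u, v, hu, hv, hh⟩ := IH m (by omega) u' v' (C.good1 _ m 1 hG (by ring)) hm
    refine ⟨j + 1, μ, u, v, hu, hv, ?_⟩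
    push_cast
    linear_combination c * hh
  obtain ⟨w1, y, hw, hy⟩ := C.sign hgn hg h1 h2 hp1 hcu
  rw [← hw] at h1
  by_cases hng : n = g
  · subst hng
    obtain ⟨e1, e2⟩ := C.same h1 h2 hy
    exact ⟨0, 0, u2, v2, e1, by rw [e2, hw], by simp⟩
  obtain ⟨l, hl⟩ := Nat.exists_eq_add_of_le hgn
  rcases Nat.lt_or_ge n (2 * g) with hn2 | hn2
  · exfalso
    obtain ⟨U, V, -, -, hUV⟩ := C.step (k := l) hl (by omega) le_rfl h1 h2 hcu hy
    have := hmin _ U V (C.good2 n _ (n - l) hG (by omega)) hUV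
    omega
  · obtain ⟨U, V, hU, hV, hUV⟩ := C.step (k := g) hl le_rfl (by omega) h1 h2 hcu hy
    obtain ⟨j, μ, u, v, hu, hv, hh⟩ := IH (n - 2 * g) (by omega) U V
      (C.good1 n _ g hG (by omega)) hUV
    have hU' : (c : ℂ) ^ g * U = u2 + e * b * w1 * y := by exact_mod_cast hU
    have hV' : (c : ℂ) ^ g * V = - v2 + e * a * u1 * y := by exact_mod_cast hV
    have h1' : (a : ℂ) * u1 ^ 2 + b * w1 ^ 2 = h ^ 2 * c ^ g := by exact_mod_cast h1
    have hy' : (u1 : ℂ) * v2 - u2 * w1 = h * c ^ g * y := by exact_mod_cast hy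
    have he' : (h : ℂ) * e = 2 := by exact_mod_cast C.he
    -- the product with the conjugate
    have e1 : ((u2 : ℂ) * s + v2 * t) * (u1 * s - w1 * t) ^ 2
        = h ^ 2 * c ^ g * (c ^ g * U * s + c ^ g * V * t) := by
      rw [hU', hV']
      have hb' : (b : ℂ) = - t ^ 2 := by rw [ht]; ring
      rw [← hs, hb'] at h1' ⊢
      linear_combination s * (u2 * h1' - 2 * t ^ 2 * w1 * hy' + t ^ 2 * w1 * y * h * c ^ g * he')
        + t * (- v2 * h1' + 2 * s ^ 2 * u1 * hy' - s ^ 2 * u1 * y * h * c ^ g * he')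
    have hnm : ((u1 : ℂ) * s - w1 * t) * (u1 * s + w1 * t) = h ^ 2 * c ^ g := by
      linear_combination u1 ^ 2 * hs - w1 ^ 2 * ht + h1'
    have e2 : (h : ℂ) ^ 2 * (u2 * s + v2 * t) = (U * s + V * t) * (u1 * s + w1 * t) ^ 2 := by
      have hne : (h : ℂ) ^ 2 * (c ^ g) ^ 2 ≠ 0 := by positivity
      apply mul_left_cancel₀ hne
      have h3 : (((u1 : ℂ) * s - w1 * t) * (u1 * s + w1 * t)) ^ 2 = (h ^ 2 * c ^ g) ^ 2 := by
        rw [hnm]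
      linear_combination (u1 * s + w1 * t) ^ 2 * e1 - (u2 * s + v2 * t) * h3
    have huC : (u : ℂ) ^ 2 = u1 ^ 2 := by exact_mod_cast hu
    have hvC : (v : ℂ) ^ 2 = w1 ^ 2 := by rw [← hw] at hv; exact_mod_cast hv
    have hsq : (u * v) ^ 2 = (u1 * w1) ^ 2 := by rw [mul_pow, mul_pow, hu, hv, hw]
    rcases sq_eq_sq_iff_eq_or_eq_neg.1 hsq with h3 | h3
    · have h3' : (u : ℂ) * v = u1 * w1 := by exact_mod_cast h3
      refine ⟨j, μ + 1, u, v, hu, hv, ?_⟩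
      have e3 : ((u1 : ℂ) * s + w1 * t) ^ 2 = (u * s + v * t) ^ 2 := by
        linear_combination - s ^ 2 * huC - t ^ 2 * hvC - 2 * s * t * h3'
      rw [e3] at e2
      rw [show 2 * (μ + 1) = 2 * μ + 2 by ring, show 2 * μ + 2 + 1 = (2 * μ + 1) + 2 by ring,
        pow_add _ (2 * μ) 2, pow_add _ (2 * μ + 1) 2]
      linear_combination h ^ (2 * μ) * e2 + (u * s + v * t) ^ 2 * hh
    · have h3' : (u : ℂ) * v = - (u1 * w1) := by exact_mod_cast h3
      have e3 : ((u1 : ℂ) * s + w1 * t) ^ 2 = (u * s - v * t) ^ 2 := by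
        linear_combination - s ^ 2 * huC - t ^ 2 * hvC + 2 * s * t * h3'
      have e4 : ((u : ℂ) * s - v * t) * (u * s + v * t) = h ^ 2 * c ^ g := by
        linear_combination hnm + s ^ 2 * huC - t ^ 2 * hvC
      rw [e3] at e2
      have hh2 : (h : ℂ) ^ 2 ≠ 0 := pow_ne_zero _ hhc
      rcases μ with _ | μ
      · refine ⟨j + g, 0, u, -v, hu, by rw [← hv]; ring, ?_⟩
        apply mul_left_cancel₀ hh2
        push_cast
        rw [pow_add]
        simp only [mul_zero, pow_zero, zero_add, pow_one, one_mul] at hh ⊢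
        linear_combination e2 + (u * s - v * t) ^ 2 * hh + c ^ j * (u * s - v * t) * e4
      · refine ⟨j + 2 * g, μ, u, v, hu, hv, ?_⟩
        apply mul_left_cancel₀ (mul_ne_zero hh2 hh2)
        rw [show 2 * (μ + 1) = 2 * μ + 2 by ring, show 2 * μ + 2 + 1 = (2 * μ + 1) + 2 by ring,
          pow_add _ (2 * μ) 2, pow_add _ (2 * μ + 1) 2] at hh
        have e5 : (((u : ℂ) * s - v * t) * (u * s + v * t)) ^ 2 = (h ^ 2 * c ^ g) ^ 2 := by rw [e4]
        rw [show j + 2 * g = j + (g + g) by ring, pow_add, pow_add]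
        linear_combination h ^ (2 * μ) * h ^ 2 * e2 + (u * s - v * t) ^ 2 * hh
          + c ^ j * (u * s + v * t) ^ (2 * μ + 1) * e5

theorem Cfg.closure {a b c h e : ℤ} {G : ℕ → Prop} (C : Cfg a b c h e G) (s t : ℂ)
    (hs : s ^ 2 = a) (ht : t ^ 2 = -b) {g : ℕ} {u v : ℤ}
    (h1 : a * u ^ 2 + b * v ^ 2 = h ^ 2 * c ^ g) (m : ℕ) :
    ∃ P Q : ℤ, (STq (a * u ^ 2) (b * v ^ 2) m).1 = h ^ (2 * m) * P ∧
      (STq (a * u ^ 2) (b * v ^ 2) m).2 = h ^ (2 * m) * Q ∧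
      ((u : ℂ) * s + v * t) ^ (2 * m + 1)
        = h ^ (2 * m) * (((u * P : ℤ) : ℂ) * s + ((v * Q : ℤ) : ℂ) * t) ∧
      a * (u * P) ^ 2 + b * (v * Q) ^ 2 = h ^ 2 * c ^ (g * (2 * m + 1)) := by
  obtain ⟨P, Q, R, hP, hQ, -⟩ := ST_int (a * u ^ 2) (b * v ^ 2) h e (c ^ g) C.he h1 m
  refine ⟨P, Q, hP, hQ, ?_, ?_⟩
  · rw [ST_pow s t a b u v hs ht m, hP, hQ]
    push_cast
    ring
  · have := ST_norm (a * u ^ 2) (b * v ^ 2) m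
    rw [hP, hQ, h1, mul_pow (h ^ 2), ← pow_mul, ← pow_mul] at this
    have hne : (h ^ (2 * m)) ^ 2 ≠ 0 := pow_ne_zero _ (pow_ne_zero _ C.hh.ne')
    apply mul_left_cancel₀ hne
    rw [show 2 * (2 * m + 1) = 2 * m + 2 * m + 2 by ring, pow_add, pow_add] at this
    linear_combination this

theorem Cfg.pow_lemma {a b c h e : ℤ} {G : ℕ → Prop} (C : Cfg a b c h e G) {n m : ℕ}
    {u2 v2 u0 v0 : ℤ} (hG : G n) (h2 : a * u2 ^ 2 + b * v2 ^ 2 = h ^ 2 * c ^ n) (hp2 : ¬ c ∣ u2)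
    (hGm : G m) (h0 : a * u0 ^ 2 + b * v0 ^ 2 = h ^ 2 * c ^ m) (hmn : m < n) :
    ∃ (μ k : ℕ) (u v P Q : ℤ), Nat.Prime (2 * μ + 1) ∧ k * (2 * μ + 1) = n ∧
      a * u ^ 2 + b * v ^ 2 = h ^ 2 * c ^ k ∧ u2 = u * P ∧ v2 = v * Q ∧
      h ^ (2 * μ) * P = (STq (a * u ^ 2) (b * v ^ 2) μ).1 ∧
      h ^ (2 * μ) * Q = (STq (a * u ^ 2) (b * v ^ 2) μ).2 := by
  classical
  obtain ⟨s, t, hs, ht, hinj⟩ := exists_st a b C.ha C.hb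
  have hhc : (h : ℂ) ≠ 0 := by exact_mod_cast C.hh.ne'
  have hex : ∃ g, ∃ u v : ℤ, G g ∧ a * u ^ 2 + b * v ^ 2 = h ^ 2 * c ^ g := ⟨m, u0, v0, hGm, h0⟩
  obtain ⟨u1, v1, hGg, h1⟩ := Nat.find_spec hex
  have hmin : ∀ n u v, G n → a * u ^ 2 + b * v ^ 2 = h ^ 2 * c ^ n → Nat.find hex ≤ n :=
    fun n u v hn hh => Nat.find_min' hex ⟨u, v, hn, hh⟩
  generalize Nat.find hex = g at *
  have hgm := hmin m u0 v0 hGm h0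
  have hg : 0 < g := by
    rcases Nat.eq_zero_or_pos g with h | h
    · subst h
      exact absurd (by simpa using h1) (C.good0 u1 v1 hGg)
    · exact h
  have hp1 : ¬ c ∣ u1 := by
    intro hd
    obtain ⟨u', v', m', -, -, rfl, hm'⟩ := C.descend hg h1 hd
    have := hmin m' u' v' (C.good1 _ m' 1 hGg (by ring)) hm'
    omega
  obtain ⟨j, μ, u, v, hu, hv, hh⟩ := C.gen s t hs ht hg h1 hp1 hmin n u2 v2 hG h2
  rw [← hu, ← hv] at h1
  obtain ⟨P, Q, -, -, hpow, hel⟩ := C.closure s t hs ht h1 μ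
  have hnn : n = g * (2 * μ + 1) := by
    rw [hpow] at hh
    have h3 : (u2 : ℂ) * s + v2 * t = ((c ^ j * (u * P) : ℤ) : ℂ) * s
        + ((c ^ j * (v * Q) : ℤ) : ℂ) * t := by
      apply mul_left_cancel₀ (pow_ne_zero (2 * μ) hhc)
      rw [hh]; push_cast; ring
    obtain ⟨e1, e2⟩ := hinj _ _ _ _ h3
    have hj : j = 0 := by
      by_contra hj
      exact hp2 (e1 ▸ Dvd.dvd.mul_right (dvd_pow_self c hj) _)
    subst hj
    rw [e1, e2] at h2
    simp only [pow_zero, one_mul] at h2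
    rw [h2] at hel
    have h4 := mul_left_cancel₀ (pow_ne_zero 2 C.hh.ne') hel
    have hc1 : 1 < c := by
      have := C.hc.not_isUnit
      have h5 := C.hc0
      rcases eq_or_ne c 1 with h6 | h6
      · rw [h6] at this; exact absurd isUnit_one this
      · omega
    exact Int.pow_right_injective (by omega) h4
  have hj : j = 0 := by
    rw [hpow] at hh
    have h3 : (u2 : ℂ) * s + v2 * t = ((c ^ j * (u * P) : ℤ) : ℂ) * s
        + ((c ^ j * (v * Q) : ℤ) : ℂ) * t := by
      apply mul_left_cancel₀ (pow_ne_zero (2 * μ) hhc)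
      rw [hh]; push_cast; ring
    obtain ⟨e1, e2⟩ := hinj _ _ _ _ h3
    by_contra hj
    exact hp2 (e1 ▸ Dvd.dvd.mul_right (dvd_pow_self c hj) _)
  subst hj
  have hμ : 2 * μ + 1 ≠ 1 := by
    intro h; rw [h] at hnn; omega
  obtain ⟨r, hr, k, hk⟩ := Nat.exists_prime_and_dvd hμ
  have hrodd : Odd r := (Nat.odd_mul.1 (hk ▸ ⟨μ, rfl⟩ : Odd (r * k))).1
  have hkodd : Odd k := (Nat.odd_mul.1 (hk ▸ ⟨μ, rfl⟩ : Odd (r * k))).2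
  obtain ⟨ρ, rfl⟩ := hrodd
  obtain ⟨κ, rfl⟩ := hkodd
  obtain ⟨P1, Q1, -, -, hpow1, hel1⟩ := C.closure s t hs ht h1 κ
  obtain ⟨P2, Q2, hP2, hQ2, hpow2, hel2⟩ := C.closure s t hs ht hel1 ρ
  have h3 : (u2 : ℂ) * s + v2 * t = ((u * P1 * P2 : ℤ) : ℂ) * s
        + ((v * Q1 * Q2 : ℤ) : ℂ) * t := by
    apply mul_left_cancel₀ (pow_ne_zero (2 * μ) hhc)
    rw [hh, hk, mul_comm (2 * ρ + 1) (2 * κ + 1), pow_mul, hpow1, mul_pow, hpow2, pow_zero, one_mul,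
      ← mul_assoc, ← pow_mul, ← pow_add]
    congr 2
    nlinarith
  obtain ⟨e1, e2⟩ := hinj _ _ _ _ h3
  exact ⟨ρ, g * (2 * κ + 1), u * P1, v * Q1, P2, Q2, hr, by rw [hnn, hk]; ring, hel1, e1, e2,
    hP2.symm, hQ2.symm⟩

theorem pow_per {a m T : ℕ} (n : ℕ) (h : a ^ T % m = 1 % m) : a ^ n % m = a ^ (n % T) % m := by
  conv_lhs => rw [← Nat.div_add_mod n T, pow_add, pow_mul]
  have h1 : (a ^ T) ^ (n / T) ≡ 1 ^ (n / T) [MOD m] := Nat.ModEq.pow _ h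
  have h2 := h1.mul_right (a ^ (n % T))
  rw [one_pow, one_mul] at h2
  exact h2

theorem three_pow_sub (w t : ℕ) (h : 3 ^ w = 2 ^ t + 1) : t = 1 ∨ t = 3 := by
  by_contra hne
  push Not at hne
  have h4 : t = 0 ∨ t = 2 ∨ 4 ≤ t := by omega
  rcases h4 with rfl | rfl | h4
  · rcases w with _ | w
    · simp at h
    · rw [pow_succ] at h; omega
  · rcases w with _ | w
    · simp at h
    · rw [pow_succ] at h; omega
  · obtain ⟨s, rfl⟩ := Nat.exists_eq_add_of_le' h4
    rw [pow_add] at h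
    have h5 : 3 ^ w % 16 = 1 := by omega
    rw [pow_per (T := 4) w (by norm_num)] at h5
    have h6 : w % 4 = 0 := by
      have : w % 4 < 4 := Nat.mod_lt _ (by norm_num)
      interval_cases w % 4 <;> simp at h5 ⊢
    have h7 : 3 ^ w % 5 = 1 := by
      rw [pow_per (T := 4) w (by norm_num), h6]; norm_num
    have h8 : 2 ^ s % 5 = 0 := by omega
    have h9 : 5 ∣ 2 ^ s := Nat.dvd_of_mod_eq_zero h8
    have := (by norm_num : Nat.Prime 5).dvd_of_dvd_pow h9
    omega

theorem three_pow_add (w t : ℕ) (h : 3 ^ w + 1 = 2 ^ t) : t ≤ 2 := by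
  by_contra h3
  obtain ⟨s, rfl⟩ := Nat.exists_eq_add_of_le' (by omega : 3 ≤ t)
  rw [pow_add] at h
  have h5 : 3 ^ w % 8 = 7 := by omega
  rw [pow_per (T := 2) w (by norm_num)] at h5
  have : w % 2 < 2 := Nat.mod_lt _ (by norm_num)
  interval_cases w % 2 <;> simp at h5

theorem sq_one_cases {x : ℤ} (h : x ^ 2 = 1) : x = 1 ∨ x = -1 := by
  have : (x - 1) * (x + 1) = 0 := by linarith
  rcases mul_eq_zero.1 this with h | h <;> omega

theorem pure_unit {a : ℕ} (ha : a.Prime) {i : ℕ} {P : ℤ} (hP : P ∣ (a : ℤ) ^ i)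
    (h : ¬ (a : ℤ) ∣ P) : P ^ 2 = 1 := by
  have h1 : P.natAbs ∣ a ^ i := by
    have := Int.natAbs_dvd_natAbs.2 hP
    rwa [Int.natAbs_pow, Int.natAbs_natCast] at this
  obtain ⟨j, -, hj⟩ := (Nat.dvd_prime_pow ha).1 h1
  have : j = 0 := by
    by_contra hj0
    apply h
    rw [Int.natCast_dvd, hj]
    exact dvd_pow_self a hj0
  subst this
  rw [← Int.natAbs_pow_two, hj]; simp

theorem pure_ne {a : ℕ} (ha : a.Prime) {x μ i : ℕ} {B P H : ℤ} (hx : 0 < x) (haB : ¬ (a : ℤ) ∣ B)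
    (hr : (2 * μ + 1).Prime) (har : a ≠ 2 * μ + 1)
    (hS : H * P = (STq ((a : ℤ) ^ x) B μ).1) (hP : P ∣ (a : ℤ) ^ i) : P ^ 2 = 1 := by
  apply pure_unit ha hP
  intro hd
  obtain ⟨k, hk⟩ := (ST_congr1 ((a : ℤ) ^ x) B μ).1
  rw [← hS] at hk
  have h1 : (a : ℤ) ∣ (2 * μ + 1) * (-B) ^ μ := by
    have : (2 * μ + 1) * (-B) ^ μ = H * P - (a : ℤ) ^ x * k := by linarith
    rw [this]
    exact dvd_sub (hd.mul_left _) ((dvd_pow_self _ hx.ne').mul_right _)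
  have hap : Prime (a : ℤ) := Nat.prime_iff_prime_int.1 ha
  rcases hap.dvd_or_dvd h1 with h2 | h2
  · have h3 : a ∣ 2 * μ + 1 := by exact_mod_cast h2
    exact har ((Nat.prime_dvd_prime_iff_eq ha hr).1 h3)
  · have := hap.dvd_of_dvd_pow h2
    exact haB (by simpa using this)

theorem pure_le {a : ℕ} (ha : a.Prime) {x μ i : ℕ} {B P H : ℤ} (hx : 0 < x) (haB : ¬ (a : ℤ) ∣ B)
    (hr : (2 * μ + 1).Prime) (hμ : 2 ≤ μ)
    (hS : H * P = (STq ((a : ℤ) ^ x) B μ).1) (hP : P ∣ (a : ℤ) ^ i) :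
    P ^ 2 ≤ (2 * μ + 1) ^ 2 := by
  by_cases har : a = 2 * μ + 1
  · have h1 : P.natAbs ∣ a ^ i := by
      have := Int.natAbs_dvd_natAbs.2 hP
      rwa [Int.natAbs_pow, Int.natAbs_natCast] at this
    obtain ⟨j, -, hj⟩ := (Nat.dvd_prime_pow ha).1 h1
    have hap : Prime (a : ℤ) := Nat.prime_iff_prime_int.1 ha
    have ha0 : (a : ℤ) ≠ 0 := hap.ne_zero
    have harz : (2 * (μ : ℤ) + 1) = a := by rw [har]; push_cast; ring
    have hj1 : j ≤ 1 := by
      by_contra hj2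
      have hd : (a : ℤ) ^ 2 ∣ P := by
        rw [← Int.dvd_natAbs, hj]
        push_cast
        exact pow_dvd_pow _ (by omega)
      obtain ⟨k, hk⟩ := (ST_congr2 ((a : ℤ) ^ x) B μ).1
      rw [← hS, harz] at hk
      have h2 : (a : ℤ) * a ∣ a * (3 * (-B) ^ (μ + 1)) := by
        have : a * (3 * (-B) ^ (μ + 1)) = 3 * (-B) * (H * P)
          - a * μ * (2 * μ - 1) * (a : ℤ) ^ x * (-B) ^ μ - ((a : ℤ) ^ x) ^ 2 * k := by
          linarith
        rw [this, ← sq]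
        have hx1 : (a : ℤ) ∣ (a : ℤ) ^ x := dvd_pow_self _ hx.ne'
        refine dvd_sub (dvd_sub ((hd.mul_left _).mul_left _) ?_)
          ((pow_dvd_pow_of_dvd hx1 2).mul_right _)
        obtain ⟨w, hw⟩ := hx1
        rw [hw]
        exact ⟨μ * (2 * μ - 1) * w * (-B) ^ μ, by ring⟩
      have h3 := (mul_dvd_mul_iff_left ha0).1 h2
      rcases hap.dvd_or_dvd h3 with h4 | h4
      · have : a ∣ 3 := by exact_mod_cast h4
        have := Nat.le_of_dvd (by norm_num) this
        omega
      · have := hap.dvd_of_dvd_pow h4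
        exact haB (by simpa using this)
    rw [harz, ← Int.natAbs_pow_two P, hj]
    have : a ^ j ≤ a := by
      calc a ^ j ≤ a ^ 1 := Nat.pow_le_pow_right ha.pos hj1
        _ = a := pow_one a
    have : ((a ^ j : ℕ) : ℤ) ≤ a := by exact_mod_cast this
    gcongr
  · rw [pure_ne ha hx haB hr har hS hP]
    have : (0 : ℤ) ≤ μ := by positivity
    nlinarith

theorem pow_ge_sq (r : ℕ) (hr : 7 ≤ r) : r ^ 2 < 2 ^ (r - 1) := by
  induction r, hr using Nat.le_induction with
  | base => norm_num
  | succ r hr ih =>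
    have : 2 ^ (r + 1 - 1) = 2 * 2 ^ (r - 1) := by
      rw [← pow_succ']; congr 1; omega
    rw [this]
    nlinarith

theorem prime_of_pow_eq {b y q : ℕ} (hq : q.Prime) (hb : b.Prime) (hy : 0 < y) (h : b ^ y = q) :
    b = q := by
  have : b ∣ q := h ▸ dvd_pow_self b hy.ne'
  exact (Nat.prime_dvd_prime_iff_eq hb hq).1 this

/-- the case `r = 3`, `a = 3` -/
theorem pure_three {b c x y k i j : ℕ} {h P Q : ℤ} (hb : b.Prime) (hb3 : b ≠ 3)
    (hx : 0 < x) (hy : 0 < y) (hk : 0 < k)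
    (mode : (h = 1 ∧ 3 ≤ c ∧ b = 2) ∨ (h = 2 ∧ c = 2 ∧ b ≠ 2)) (hc : c.Prime)
    (hex1 : ¬ (b = 2 ∧ c = 11)) (hex2 : ¬ (b = 5 ∧ c = 2)) (hex3 : ¬ (b = 13 ∧ c = 2))
    (hsum : (3 : ℤ) ^ x + (b : ℤ) ^ y = h ^ 2 * (c : ℤ) ^ k)
    (hP : P ∣ (3 : ℤ) ^ i) (hQ : Q ∣ (b : ℤ) ^ j)
    (hS : h ^ 2 * P = 3 ^ x - 3 * b ^ y) (hT : h ^ 2 * Q = 3 * 3 ^ x - b ^ y) : False := by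
  have hQ1 : Q ^ 2 = 1 := by
    have hap : Prime (3 : ℤ) := Int.prime_three
    have h1 : ¬ (b : ℤ) ∣ 3 := by
      intro hd
      have : b ∣ 3 := by exact_mod_cast hd
      exact hb3 ((Nat.prime_dvd_prime_iff_eq hb Nat.prime_three).1 this)
    apply pure_unit hb hQ
    intro hd
    have hbp : Prime (b : ℤ) := Nat.prime_iff_prime_int.1 hb
    have h2 : (b : ℤ) ∣ 3 * 3 ^ x := by
      have : (3 : ℤ) * 3 ^ x = h ^ 2 * Q + b ^ y := by linarith
      rw [this]
      exact dvd_add (hd.mul_left _) (dvd_pow_self _ hy.ne')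
    rcases hbp.dvd_or_dvd h2 with h3 | h3
    · exact h1 h3
    · exact h1 (hbp.dvd_of_dvd_pow h3)
  have hQ2 : Q = 1 ∨ Q = -1 := sq_one_cases hQ1
  rcases mode with ⟨rfl, hc3, rfl⟩ | ⟨rfl, rfl, hb2⟩
  · rcases hQ2 with rfl | rfl
    · have h1 : (3 : ℕ) ^ (x + 1) = 2 ^ y + 1 := by
        have : (3 : ℤ) ^ (x + 1) = 2 ^ y + 1 := by push_cast at hT; rw [pow_succ]; linarith
        exact_mod_cast this
      have h3x : 3 ≤ 3 ^ x := by
        calc 3 = 3 ^ 1 := by norm_num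
          _ ≤ 3 ^ x := Nat.pow_le_pow_right (by norm_num) hx
      rcases three_pow_sub _ _ h1 with rfl | rfl
      · rw [pow_succ] at h1; omega
      · have : (3 : ℕ) ^ x = 3 := by rw [pow_succ] at h1; omega
        have h4 : c ^ k = 11 := by
          have : (3 : ℤ) ^ x = 3 := by exact_mod_cast this
          rw [this] at hsum
          norm_num at hsum
          exact_mod_cast hsum.symm
        exact hex1 ⟨rfl, prime_of_pow_eq (by norm_num) hc hk h4⟩
    · have h1 : (3 : ℕ) ^ (x + 1) + 1 = 2 ^ y := by
        have : (3 : ℤ) ^ (x + 1) + 1 = 2 ^ y := by push_cast at hT; rw [pow_succ]; linarith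
        exact_mod_cast this
      have h3x : 3 ≤ 3 ^ x := by
        calc 3 = 3 ^ 1 := by norm_num
          _ ≤ 3 ^ x := Nat.pow_le_pow_right (by norm_num) hx
      have := three_pow_add _ _ h1
      rw [pow_succ] at h1
      interval_cases y <;> omega
  · have h3x : 3 ≤ 3 ^ x := by
        calc 3 = 3 ^ 1 := by norm_num
          _ ≤ 3 ^ x := Nat.pow_le_pow_right (by norm_num) hx
    rcases hQ2 with rfl | rfl
    · have h1 : (3 : ℕ) ^ x = 2 ^ k + 1 := by
        have : (3 : ℤ) ^ x = 2 ^ k + 1 := by push_cast at hsum; linarith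
        exact_mod_cast this
      have h2 : (b : ℤ) ^ y = 3 * 2 ^ k - 1 := by push_cast at hsum; linarith
      rcases three_pow_sub _ _ h1 with rfl | rfl
      · have : b ^ y = 5 := by norm_num at h2; exact_mod_cast h2
        exact hex2 ⟨prime_of_pow_eq (by norm_num) hb hy this, rfl⟩
      · have h5 : (3 : ℤ) ^ x = 9 := by exact_mod_cast h1
        have : P = -15 := by rw [h5, h2] at hS; linarith
        subst this
        have h6 : (5 : ℤ) ∣ 3 ^ i := dvd_trans (by norm_num) hP
        have h7 : (5 : ℕ) ∣ 3 ^ i := by exact_mod_cast h6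
        have := (by norm_num : Nat.Prime 5).dvd_of_dvd_pow h7
        omega
    · have h1 : (3 : ℕ) ^ x + 1 = 2 ^ k := by
        have : (3 : ℤ) ^ x + 1 = 2 ^ k := by push_cast at hsum; linarith
        exact_mod_cast this
      have h2 : (b : ℤ) ^ y = 3 * 2 ^ k + 1 := by push_cast at hsum; linarith
      have h8 := three_pow_add _ _ h1
      interval_cases k
      · omega
      · have : b ^ y = 13 := by norm_num at h2; exact_mod_cast h2
        exact hex3 ⟨prime_of_pow_eq (by norm_num) hb hy this, rfl⟩

structure Exc (a b c : ℕ) : Prop where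
  e1 : ¬ (a = 2 ∧ b = 3 ∧ c = 11)
  e2 : ¬ (a = 3 ∧ b = 2 ∧ c = 11)
  e3 : ¬ (a = 3 ∧ b = 5 ∧ c = 2)
  e4 : ¬ (a = 5 ∧ b = 3 ∧ c = 2)
  e5 : ¬ (a = 3 ∧ b = 13 ∧ c = 2)
  e6 : ¬ (a = 13 ∧ b = 3 ∧ c = 2)

theorem pure_main {a b c x y k μ i j : ℕ} {h P Q : ℤ} (ha : a.Prime) (hb : b.Prime) (hab : a ≠ b)
    (hx : 0 < x) (hy : 0 < y) (hk : 0 < k)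
    (mode : (h = 1 ∧ 3 ≤ c ∧ (a = 2 ∨ b = 2)) ∨ (h = 2 ∧ c = 2 ∧ a ≠ 2 ∧ b ≠ 2)) (hc : c.Prime)
    (hex : Exc a b c) (hr : (2 * μ + 1).Prime)
    (hsum : (a : ℤ) ^ x + (b : ℤ) ^ y = h ^ 2 * (c : ℤ) ^ k)
    (hP : P ∣ (a : ℤ) ^ i) (hQ : Q ∣ (b : ℤ) ^ j)
    (hS : h ^ (2 * μ) * P = (STq ((a : ℤ) ^ x) ((b : ℤ) ^ y) μ).1)
    (hT : h ^ (2 * μ) * Q = (STq ((a : ℤ) ^ x) ((b : ℤ) ^ y) μ).2) : False := by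
  have hap : Prime (a : ℤ) := Nat.prime_iff_prime_int.1 ha
  have hbp : Prime (b : ℤ) := Nat.prime_iff_prime_int.1 hb
  have hndB : ¬ (a : ℤ) ∣ (b : ℤ) ^ y := by
    intro hd
    have : a ∣ b := by exact_mod_cast hap.dvd_of_dvd_pow hd
    exact hab ((Nat.prime_dvd_prime_iff_eq ha hb).1 this)
  have hndA : ¬ (b : ℤ) ∣ (a : ℤ) ^ x := by
    intro hd
    have : b ∣ a := by exact_mod_cast hbp.dvd_of_dvd_pow hd
    exact hab ((Nat.prime_dvd_prime_iff_eq hb ha).1 this).symm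
  have hμ : μ ≠ 0 := by
    rintro rfl; exact absurd hr (by norm_num)
  have hh : 0 < h := by rcases mode with ⟨h, -⟩ | ⟨h, -⟩ <;> omega
  have hA0 : (0 : ℤ) < (a : ℤ) ^ x := by have := ha.pos; positivity
  have hB0 : (0 : ℤ) < (b : ℤ) ^ y := by have := hb.pos; positivity
  have hA2 : (2 : ℤ) ≤ (a : ℤ) ^ x := by
    have : 2 ≤ a ^ x := le_trans ha.two_le (Nat.le_self_pow hx.ne' a)
    exact_mod_cast this
  have hB2 : (2 : ℤ) ≤ (b : ℤ) ^ y := by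
    have : 2 ≤ b ^ y := le_trans hb.two_le (Nat.le_self_pow hy.ne' b)
    exact_mod_cast this
  have hT' : (h ^ (2 * μ) * (-1) ^ μ) * Q = (STq ((b : ℤ) ^ y) ((a : ℤ) ^ x) μ).1 := by
    rw [(ST_swap _ _ μ).1, ← hT]; ring
  rcases Nat.lt_or_ge μ 2 with hμ2 | hμ2
  · have : μ = 1 := by omega
    subst this
    simp only [STq] at hS hT
    norm_num at hS hT
    by_cases ha3 : a = 3
    · subst ha3
      refine pure_three hb (Ne.symm hab) hx hy hk ?_ hc ?_ ?_ ?_ (by exact_mod_cast hsum) hP hQ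
        (by push_cast at hS; linarith) (by push_cast at hT; linarith)
      · rcases mode with ⟨h1, h2, h3⟩ | ⟨h1, h2, h3, h4⟩
        · exact Or.inl ⟨h1, h2, by omega⟩
        · exact Or.inr ⟨h1, h2, h4⟩
      · have := hex.e2; tauto
      · have := hex.e3; tauto
      · have := hex.e5; tauto
    by_cases hb3 : b = 3
    · subst hb3
      refine pure_three (h := h) (P := -Q) (Q := -P) ha hab hy hx hk ?_ hc ?_ ?_ ?_
        (by push_cast at hsum; linarith)
        (by simpa using hQ) (by simpa using hP)
        (by push_cast at hT; linarith) (by push_cast at hS; linarith)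
      · rcases mode with ⟨h1, h2, h3⟩ | ⟨h1, h2, h3, h4⟩
        · exact Or.inl ⟨h1, h2, by omega⟩
        · exact Or.inr ⟨h1, h2, h3⟩
      · have := hex.e1; tauto
      · have := hex.e4; tauto
      · have := hex.e6; tauto
    have hP1 := pure_ne (μ := 1) (H := h ^ 2) ha hx hndB hr (by omega)
      (by simp only [STq]; linarith) hP
    have hQ1 := pure_ne (μ := 1) (H := -h ^ 2) hb hy hndA hr (by omega)
      (by simp only [STq]; linarith) hQ
    have hB4 : (h = 1) ∨ (h = 2 ∧ (3 : ℤ) ≤ (b : ℤ) ^ y) := by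
      rcases mode with ⟨h1, h2, h3⟩ | ⟨h1, h2, h3, h4⟩
      · exact Or.inl h1
      · refine Or.inr ⟨h1, ?_⟩
        have h5 := hb.two_le
        have : 3 ≤ b ^ y := le_trans (by omega) (Nat.le_self_pow hy.ne' b)
        exact_mod_cast this
    rcases sq_one_cases hP1 with rfl | rfl <;>
    rcases sq_one_cases hQ1 with rfl | rfl <;>
    rcases hB4 with rfl | ⟨rfl, hB4⟩ <;> linarith
  · have hP1 := pure_le ha hx hndB hr hμ2 hS hP
    have hQ1 := pure_le hb hy hndA hr hμ2 hT' hQ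
    have hnorm := ST_norm ((a : ℤ) ^ x) ((b : ℤ) ^ y) μ
    rw [← hS, ← hT, hsum] at hnorm
    have hc0 : (0 : ℤ) < c := by have := hc.pos; positivity
    have h1 : h ^ 2 * (c : ℤ) ^ k * ((c : ℤ) ^ k) ^ (2 * μ) ≤ h ^ 2 * (c : ℤ) ^ k * (2 * μ + 1) ^ 2 := by
      have e1 : (h ^ (2 * μ)) ^ 2 * (h ^ 2 * (c : ℤ) ^ k * ((c : ℤ) ^ k) ^ (2 * μ))
          = (h ^ (2 * μ)) ^ 2 * ((a : ℤ) ^ x * P ^ 2 + (b : ℤ) ^ y * Q ^ 2) := by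
        have : (h ^ 2 * (c : ℤ) ^ k) ^ (2 * μ + 1)
            = (h ^ (2 * μ)) ^ 2 * (h ^ 2 * (c : ℤ) ^ k * ((c : ℤ) ^ k) ^ (2 * μ)) := by
          rw [pow_succ, mul_pow, ← pow_mul, ← pow_mul h]; ring
        rw [← this, ← hnorm]; ring
      have e2 := mul_left_cancel₀ (by positivity) e1
      rw [e2, ← hsum]
      nlinarith
    have h2 : ((c : ℤ) ^ k) ^ (2 * μ) ≤ (2 * μ + 1) ^ 2 := le_of_mul_le_mul_left h1 (by positivity)
    have h3 : (c ^ k) ^ (2 * μ) ≤ (2 * μ + 1) ^ 2 := by exact_mod_cast h2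
    have hck : c ≤ c ^ k := Nat.le_self_pow hk.ne' c
    have h4 : c ^ (2 * μ) ≤ (2 * μ + 1) ^ 2 := le_trans (Nat.pow_le_pow_left hck _) h3
    have h5 : 2 ^ (2 * μ) ≤ (2 * μ + 1) ^ 2 := le_trans (Nat.pow_le_pow_left hc.two_le _) h4
    have hμ3 : μ = 2 := by
      by_contra hne
      have := pow_ge_sq (2 * μ + 1) (by omega)
      rw [show 2 * μ + 1 - 1 = 2 * μ by omega] at this
      omega
    subst hμ3
    rcases mode with ⟨h6, h7, -⟩ | ⟨h6, h7, h8, h9⟩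
    · have := Nat.pow_le_pow_left h7 (2 * 2)
      norm_num at this h4
      omega
    · subst h7
      have hk1 : k = 1 := by
        by_contra hk1
        have h10 : 2 ^ 2 ≤ 2 ^ k := Nat.pow_le_pow_right (by norm_num) (by omega)
        have := Nat.pow_le_pow_left h10 (2 * 2)
        norm_num at this h3
        omega
      subst hk1
      subst h6
      have h11 : a ^ x + b ^ y = 8 := by
        norm_num at hsum; exact_mod_cast hsum
      have ha3 : 3 ≤ a := by have := ha.two_le; omega
      have hb3 : 3 ≤ b := by have := hb.two_le; omega
      have hax := Nat.le_self_pow hx.ne' a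
      have hby := Nat.le_self_pow hy.ne' b
      have e3 := hex.e3
      have e4 := hex.e4
      have ha4 : a ≠ 4 := by rintro rfl; exact absurd ha (by norm_num)
      have hb4 : b ≠ 4 := by rintro rfl; exact absurd hb (by norm_num)
      have : a = 3 ∧ b = 3 ∨ (a = 3 ∧ b = 5) ∨ (a = 5 ∧ b = 3) := by omega
      omega

structure Mode (a b c : ℕ) (h e : ℤ) : Prop where
  ha : a.Prime
  hb : b.Prime
  hc : c.Prime
  hab : a ≠ b
  hac : a ≠ c
  hbc : b ≠ c
  mode : (h = 1 ∧ e = 2 ∧ 3 ≤ c ∧ (a = 2 ∨ b = 2)) ∨ (h = 2 ∧ e = 1 ∧ c = 2 ∧ a ≠ 2 ∧ b ≠ 2)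

theorem int_sq_cases (u : ℤ) : u ^ 2 = 0 ∨ u ^ 2 = 1 ∨ 4 ≤ u ^ 2 := by
  rcases lt_trichotomy u 0 with h | h | h
  · rcases eq_or_ne u (-1) with h1 | h1
    · subst h1; simp
    · right; right; have : u ≤ -2 := by omega
      nlinarith
  · subst h; simp
  · rcases eq_or_ne u 1 with h1 | h1
    · subst h1; simp
    · right; right; have : 2 ≤ u := by omega
      nlinarith

theorem Mode.prime_not_dvd {p q n : ℕ} (hp : p.Prime) (hq : q.Prime) (h : q ≠ p) :
    ¬ (p : ℤ) ∣ (q : ℤ) ^ n := by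
  intro hd
  have h1 : p ∣ q ^ n := by exact_mod_cast hd
  exact h ((Nat.prime_dvd_prime_iff_eq hp hq).1 (hp.dvd_of_dvd_pow h1)).symm

theorem Mode.cfg {a b c : ℕ} {h e : ℤ} (M : Mode a b c h e) {α β : ℕ} (hα : 0 < α) (hβ : 0 < β) :
    Cfg ((a : ℤ) ^ α) ((b : ℤ) ^ β) c h e (fun _ => True) := by
  have ha2 := M.ha.two_le
  have hb2 := M.hb.two_le
  have hA : (a : ℤ) ≤ (a : ℤ) ^ α := by exact_mod_cast Nat.le_self_pow hα.ne' a
  have hB : (b : ℤ) ≤ (b : ℤ) ^ β := by exact_mod_cast Nat.le_self_pow hβ.ne' b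
  have ha2' : (2 : ℤ) ≤ a := by exact_mod_cast ha2
  have hb2' : (2 : ℤ) ≤ b := by exact_mod_cast hb2
  refine
  { ha := by linarith
    hb := by linarith
    hc := Nat.prime_iff_prime_int.1 M.hc
    hc0 := by exact_mod_cast M.hc.pos
    hca := Mode.prime_not_dvd M.hc M.ha M.hac
    hcb := Mode.prime_not_dvd M.hc M.hb M.hbc
    hh := by rcases M.mode with ⟨h, -⟩ | ⟨h, -⟩ <;> omega
    he := by rcases M.mode with ⟨rfl, rfl, -⟩ | ⟨rfl, rfl, -⟩ <;> norm_num
    hce := ?_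
    mode := ?_
    hab := ?_
    good1 := fun _ _ _ _ _ => trivial
    good2 := fun _ _ _ _ _ => trivial
    good0 := ?_ }
  · rcases M.mode with ⟨rfl, rfl, h1, -⟩ | ⟨rfl, rfl, rfl, -⟩
    · intro hd
      have := Int.le_of_dvd (by norm_num) hd
      omega
    · norm_num
  · rcases M.mode with ⟨rfl, rfl, h1, -⟩ | ⟨rfl, rfl, rfl, -⟩
    · exact Or.inl rfl
    · exact Or.inr ⟨rfl, rfl, rfl⟩
  · rcases M.mode with ⟨rfl, rfl, h1, -⟩ | ⟨rfl, rfl, rfl, h2, h3⟩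
    · nlinarith
    · have : (3 : ℤ) ≤ a := by exact_mod_cast (by omega : 3 ≤ a)
      have : (3 : ℤ) ≤ b := by exact_mod_cast (by omega : 3 ≤ b)
      nlinarith
  · intro u v _ heq
    rcases M.mode with ⟨rfl, rfl, h1, -⟩ | ⟨rfl, rfl, rfl, h2, h3⟩
    · rcases int_sq_cases u with hu | hu | hu <;> rcases int_sq_cases v with hv | hv | hv <;>
        nlinarith
    · have h3a : (3 : ℤ) ≤ a := by exact_mod_cast (by omega : 3 ≤ a)
      have h3b : (3 : ℤ) ≤ b := by exact_mod_cast (by omega : 3 ≤ b)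
      have hoa : (a : ℤ) ^ α ≠ 4 := by
        intro h
        apply Mode.prime_not_dvd (n := α) Nat.prime_two M.ha h2
        rw [h]; norm_num
      have hob : (b : ℤ) ^ β ≠ 4 := by
        intro h
        apply Mode.prime_not_dvd (n := β) Nat.prime_two M.hb h3
        rw [h]; norm_num
      rcases int_sq_cases u with hu | hu | hu <;> rcases int_sq_cases v with hv | hv | hv
      · rw [hu, hv] at heq; norm_num at heq
      · rw [hu, hv] at heq; apply hob; linarith
      · nlinarith
      · rw [hu, hv] at heq; apply hoa; linarith
      · rw [hu, hv] at heq; linarith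
      all_goals nlinarith

theorem abs_pow_of_dvd {a i : ℕ} (ha : a.Prime) {u : ℤ} (h : u ∣ (a : ℤ) ^ i) :
    ∃ j, u ^ 2 = ((a : ℤ) ^ j) ^ 2 := by
  have h1 : u.natAbs ∣ a ^ i := by
    have := Int.natAbs_dvd_natAbs.2 h
    rwa [Int.natAbs_pow, Int.natAbs_natCast] at this
  obtain ⟨j, -, hj⟩ := (Nat.dvd_prime_pow ha).1 h1
  refine ⟨j, ?_⟩
  rw [← Int.natAbs_pow_two, hj]; push_cast; rfl

theorem Mode.pure_contra {a b c : ℕ} {h e : ℤ} (M : Mode a b c h e) (hex : Exc a b c)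
    {α β i j k μ : ℕ} (hα : 0 < α) (hβ : 0 < β) (hk : 0 < k) {u v P Q : ℤ}
    (hr : (2 * μ + 1).Prime)
    (hel : (a : ℤ) ^ α * u ^ 2 + (b : ℤ) ^ β * v ^ 2 = h ^ 2 * (c : ℤ) ^ k)
    (h2 : (a : ℤ) ^ i = u * P) (h3 : (b : ℤ) ^ j = v * Q)
    (hS : h ^ (2 * μ) * P = (STq ((a : ℤ) ^ α * u ^ 2) ((b : ℤ) ^ β * v ^ 2) μ).1)
    (hT : h ^ (2 * μ) * Q = (STq ((a : ℤ) ^ α * u ^ 2) ((b : ℤ) ^ β * v ^ 2) μ).2) : False := by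
  obtain ⟨i', hi'⟩ := abs_pow_of_dvd M.ha (Dvd.intro _ h2.symm)
  obtain ⟨j', hj'⟩ := abs_pow_of_dvd M.hb (Dvd.intro _ h3.symm)
  have e1 : (a : ℤ) ^ α * u ^ 2 = (a : ℤ) ^ (α + i' * 2) := by rw [hi', pow_add, pow_mul]
  have e2 : (b : ℤ) ^ β * v ^ 2 = (b : ℤ) ^ (β + j' * 2) := by rw [hj', pow_add, pow_mul]
  rw [e1, e2] at hel hS hT
  refine pure_main M.ha M.hb M.hab (by omega) (by omega) hk ?_ M.hc hex hr hel
    (Dvd.intro_left _ h2.symm) (Dvd.intro_left _ h3.symm) hS hT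
  rcases M.mode with ⟨h1, -, h3, h4⟩ | ⟨h1, -, h3, h4⟩
  · exact Or.inl ⟨h1, h3, h4⟩
  · exact Or.inr ⟨h1, h3, h4⟩

theorem Mode.class_min {a b c : ℕ} {h e : ℤ} (M : Mode a b c h e) (hex : Exc a b c)
    {α β i j k m : ℕ} (hα : 0 < α) (hβ : 0 < β) (hk : 0 < k)
    (h1 : (a : ℤ) ^ (α + 2 * i) + (b : ℤ) ^ (β + 2 * j) = h ^ 2 * (c : ℤ) ^ k) {u v : ℤ}
    (h2 : (a : ℤ) ^ α * u ^ 2 + (b : ℤ) ^ β * v ^ 2 = h ^ 2 * (c : ℤ) ^ m) : k ≤ m := by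
  by_contra hlt
  have C := M.cfg hα hβ
  have h1' : (a : ℤ) ^ α * ((a : ℤ) ^ i) ^ 2 + (b : ℤ) ^ β * ((b : ℤ) ^ j) ^ 2
      = h ^ 2 * (c : ℤ) ^ k := by
    rw [← h1, pow_add, pow_add, mul_comm 2 i, mul_comm 2 j, pow_mul, pow_mul]
  obtain ⟨μ, k', u', v', P, Q, hr, hkk, hel, e1, e2, hS, hT⟩ := C.pow_lemma trivial h1'
    (Mode.prime_not_dvd M.hc M.ha M.hac) trivial h2 (by omega)
  have hk' : 0 < k' := by
    rcases Nat.eq_zero_or_pos k' with h | h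
    · subst h; omega
    · exact h
  exact M.pure_contra hex hα hβ hk' hr hel e1 e2 hS hT

theorem Mode.class_unique {a b c : ℕ} {h e : ℤ} (M : Mode a b c h e) (hex : Exc a b c)
    {x y k x' y' k' : ℕ} (hx : 0 < x) (hy : 0 < y) (hx' : 0 < x') (hy' : 0 < y')
    (hk : 0 < k) (hk' : 0 < k') (hxx : x % 2 = x' % 2) (hyy : y % 2 = y' % 2)
    (h1 : (a : ℤ) ^ x + (b : ℤ) ^ y = h ^ 2 * (c : ℤ) ^ k)
    (h2 : (a : ℤ) ^ x' + (b : ℤ) ^ y' = h ^ 2 * (c : ℤ) ^ k') : x = x' ∧ y = y' ∧ k = k' := by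
  obtain ⟨α, i, i', hα, rfl, rfl⟩ : ∃ α i i', 0 < α ∧ x = α + 2 * i ∧ x' = α + 2 * i' :=
    ⟨2 - x % 2, (x - 1) / 2, (x' - 1) / 2, by omega, by omega, by omega⟩
  obtain ⟨β, j, j', hβ, rfl, rfl⟩ : ∃ α i i', 0 < α ∧ y = α + 2 * i ∧ y' = α + 2 * i' :=
    ⟨2 - y % 2, (y - 1) / 2, (y' - 1) / 2, by omega, by omega, by omega⟩
  have C := M.cfg hα hβ
  have h1' : (a : ℤ) ^ α * ((a : ℤ) ^ i) ^ 2 + (b : ℤ) ^ β * ((b : ℤ) ^ j) ^ 2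
      = h ^ 2 * (c : ℤ) ^ k := by
    rw [← h1, pow_add, pow_add, mul_comm 2 i, mul_comm 2 j, pow_mul, pow_mul]
  have h2' : (a : ℤ) ^ α * ((a : ℤ) ^ i') ^ 2 + (b : ℤ) ^ β * ((b : ℤ) ^ j') ^ 2
      = h ^ 2 * (c : ℤ) ^ k' := by
    rw [← h2, pow_add, pow_add, mul_comm 2 i', mul_comm 2 j', pow_mul, pow_mul]
  have e1 := M.class_min hex hα hβ hk h1 h2'
  have e2 := M.class_min hex hα hβ hk' h2 h1'
  have : k = k' := by omega
  subst this
  obtain ⟨w, y, hw, hy⟩ := C.sign le_rfl hk h1' h2' (Mode.prime_not_dvd M.hc M.ha M.hac)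
    (Mode.prime_not_dvd M.hc M.ha M.hac)
  rw [← hw] at h1'
  obtain ⟨f1, f2⟩ := C.same h1' h2' hy
  rw [hw] at f2
  have key : ∀ {p i i' : ℕ}, p.Prime → (((p : ℤ) ^ i') ^ 2 = ((p : ℤ) ^ i) ^ 2) → i = i' := by
    intro p i i' hp hh
    have : (p ^ i') ^ 2 = (p ^ i) ^ 2 := by exact_mod_cast hh
    have h3 := Nat.pow_left_injective two_ne_zero this
    exact (Nat.pow_right_injective hp.two_le h3).symm
  have g1 := key M.ha f1
  have g2 := key M.hb f2
  exact ⟨by omega, by omega, rfl⟩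

theorem odd_quot (a : ℤ) (ha : Odd a) (m : ℕ) : ∃ q, Odd q ∧ a ^ (2 * m + 1) + 1 = (a + 1) * q := by
  induction m with
  | zero => exact ⟨1, odd_one, by ring⟩
  | succ m ih =>
    obtain ⟨q, hq, h⟩ := ih
    refine ⟨a ^ 2 * q - (a - 1), ?_, ?_⟩
    · exact ((ha.pow).mul hq).sub_even (ha.sub_odd odd_one)
    · rw [show 2 * (m + 1) + 1 = (2 * m + 1) + 2 by ring, pow_add]
      linear_combination a ^ 2 * h

theorem odd_pow_dvd (a : ℤ) (ha : Odd a) {x : ℕ} (hx : x % 2 = 1) (n : ℕ) :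
    (2 : ℤ) ^ n ∣ a ^ x + 1 ↔ (2 : ℤ) ^ n ∣ a + 1 := by
  obtain ⟨q, hq, h⟩ := odd_quot a ha (x / 2)
  rw [show 2 * (x / 2) + 1 = x by omega] at h
  rw [h]
  constructor
  · intro hd
    have : IsCoprime ((2 : ℤ) ^ n) q := by
      apply IsCoprime.pow_left
      exact (Int.prime_two.irreducible.coprime_iff_not_dvd).2
        (by rw [← even_iff_two_dvd, Int.not_even_iff_odd]; exact hq)
    exact this.dvd_of_dvd_mul_right hd
  · intro hd; exact hd.mul_right _

theorem odd_pow_dvd' (a : ℤ) (ha : Odd a) {x : ℕ} (hx : x % 2 = 1) (n : ℕ) :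
    (2 : ℤ) ^ n ∣ a ^ x - 1 ↔ (2 : ℤ) ^ n ∣ a - 1 := by
  have h := odd_pow_dvd (-a) ha.neg hx n
  rw [Odd.neg_pow (Nat.odd_iff.2 hx)] at h
  rw [← dvd_neg, show -(a ^ x - 1) = -a ^ x + 1 by ring, h, ← dvd_neg]
  ring_nf

theorem not_all_pow {w : ℤ} (hw : 0 < w) (h : ∀ n : ℕ, (2 : ℤ) ^ n ∣ w) : False := by
  have h1 := Int.le_of_dvd hw (h w.toNat)
  have h2 : w.toNat < 2 ^ w.toNat := Nat.lt_two_pow_self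
  have h3 : ((w.toNat : ℕ) : ℤ) < 2 ^ w.toNat := by exact_mod_cast h2
  rw [Int.toNat_of_nonneg hw.le] at h3
  omega

/-- the `(odd, even)` class for `c = 2` -/
theorem oe_dvd {a b : ℤ} (ha : Odd a) (ha0 : 1 < a) (hb0 : 1 < b) {x y z : ℕ}
    (hx : x % 2 = 1) (hy : y % 2 = 0) (hy0 : 0 < y) (h : a ^ x + b ^ y = 2 ^ z) (n : ℕ)
    (hn : (2 : ℤ) ^ n ∣ b ^ 2 - 1) : (2 : ℤ) ^ n ∣ a + 1 := by
  rw [← odd_pow_dvd a ha hx]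
  have hb2 : b ^ 2 ≤ b ^ y := pow_le_pow_right₀ (by omega) (by omega)
  have hax : 0 < a ^ x := by positivity
  have hle := Int.le_of_dvd (by nlinarith) hn
  have hnz : n ≤ z := by
    by_contra hlt
    have : (2 : ℤ) ^ z ≤ 2 ^ n := pow_le_pow_right₀ (by norm_num) (by omega)
    omega
  have h1 : (2 : ℤ) ^ n ∣ 2 ^ z := pow_dvd_pow _ hnz
  have h2 : (2 : ℤ) ^ n ∣ b ^ y - 1 := by
    refine hn.trans ?_
    have : b ^ y = (b ^ 2) ^ (y / 2) := by rw [← pow_mul]; congr 1; omega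
    rw [this]
    exact sub_one_dvd_pow_sub_one _ _
  have : a ^ x + 1 = 2 ^ z - (b ^ y - 1) := by linarith
  rw [this]
  exact dvd_sub h1 h2

theorem oe_eo {a b : ℤ} (ha : Odd a) (hb : Odd b) (ha0 : 1 < a) (hb0 : 1 < b) {x y z x' y' z' : ℕ}
    (hx : x % 2 = 1) (hy : y % 2 = 0) (hy0 : 0 < y) (h : a ^ x + b ^ y = 2 ^ z)
    (hx' : x' % 2 = 0) (hy' : y' % 2 = 1) (hx0 : 0 < x') (h' : a ^ x' + b ^ y' = 2 ^ z') :
    False := by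
  have h1 := oe_dvd ha ha0 hb0 hx hy hy0 h
  have h2 := oe_dvd hb hb0 ha0 hy' hx' hx0 (by rw [add_comm]; exact h')
  apply not_all_pow (by omega : 0 < b + 1)
  intro n
  induction n with
  | zero => simp
  | succ n ih =>
    obtain ⟨k, hk⟩ := ih
    obtain ⟨l, hl⟩ := hb
    have h3 := h1 (n + 1) ⟨k * l, by rw [pow_succ]; subst hl; linear_combination (2 * l) * hk⟩
    refine h2 (n + 1) (h3.trans ⟨a - 1, by ring⟩)

theorem oe_oo {a b : ℤ} (ha : Odd a) (hb : Odd b) (ha0 : 1 < a) (hb0 : 1 < b) {x y z x' y' z' : ℕ}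
    (hx : x % 2 = 1) (hy : y % 2 = 0) (hy0 : 0 < y) (h : a ^ x + b ^ y = 2 ^ z)
    (hx' : x' % 2 = 1) (hy' : y' % 2 = 1) (h' : a ^ x' + b ^ y' = 2 ^ z') :
    False := by
  have h1 := oe_dvd ha ha0 hb0 hx hy hy0 h
  apply not_all_pow (by omega : 0 < b - 1)
  intro n
  induction n with
  | zero => simp
  | succ n ih =>
    have ih' := ih
    obtain ⟨k, hk⟩ := ih
    have hb' := hb
    obtain ⟨l, hl⟩ := hb'
    have h3 := h1 (n + 1) ⟨k * (l + 1), by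
      rw [pow_succ]; subst hl; linear_combination (2 * l + 2) * hk⟩
    rw [← odd_pow_dvd a ha hx'] at h3
    have hnz : n + 1 ≤ z' := by
      by_contra hlt
      have e1 : (2 : ℤ) ^ z' ≤ 2 ^ n := pow_le_pow_right₀ (by norm_num) (by omega)
      have e2 := Int.le_of_dvd (by omega) ih'
      have e3 : b ≤ b ^ y' := le_self_pow₀ (by omega) (by omega)
      have e4 : 0 < a ^ x' := by positivity
      omega
    have h4 : (2 : ℤ) ^ (n + 1) ∣ 2 ^ z' := pow_dvd_pow _ hnz
    rw [← odd_pow_dvd' b hb hy']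
    have : b ^ y' - 1 = 2 ^ z' - (a ^ x' + 1) := by linarith
    rw [this]
    exact dvd_sub h4 h3

theorem case_two {a b : ℕ} (ha : a.Prime) (hb : b.Prime) (hab : a ≠ b) (ha2 : a ≠ 2) (hb2 : b ≠ 2)
    (hex : Exc a b 2) {x y z x' y' z' : ℕ} (hx : 0 < x) (hy : 0 < y) (hx' : 0 < x') (hy' : 0 < y')
    (h : a ^ x + b ^ y = 2 ^ z) (h' : a ^ x' + b ^ y' = 2 ^ z') : x = x' ∧ y = y' ∧ z = z' := by
  have hao : Odd a := ha.odd_of_ne_two ha2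
  have hbo : Odd b := hb.odd_of_ne_two hb2
  have ha3 : 3 ≤ a := by have := ha.two_le; omega
  have hb3 : 3 ≤ b := by have := hb.two_le; omega
  have haz : Odd (a : ℤ) := by exact_mod_cast hao
  have hbz : Odd (b : ℤ) := by exact_mod_cast hbo
  have ha1 : (1 : ℤ) < a := by exact_mod_cast (by omega : 1 < a)
  have hb1 : (1 : ℤ) < b := by exact_mod_cast (by omega : 1 < b)
  have M : Mode a b 2 2 1 := ⟨ha, hb, Nat.prime_two, hab, ha2, hb2, Or.inr ⟨rfl, rfl, rfl, ha2, hb2⟩⟩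
  have big : ∀ {x y z : ℕ}, 0 < x → 0 < y → a ^ x + b ^ y = 2 ^ z → 3 ≤ z := by
    intro x y z hx hy h
    by_contra hz
    have h1 := Nat.le_self_pow hx.ne' a
    have h2 := Nat.le_self_pow hy.ne' b
    have h3 : 2 ^ z ≤ 2 ^ 2 := Nat.pow_le_pow_right (by norm_num) (by omega)
    omega
  have noee : ∀ {x y z : ℕ}, 0 < x → 0 < y → a ^ x + b ^ y = 2 ^ z → ¬ (x % 2 = 0 ∧ y % 2 = 0) := by
    rintro x y z hx hy h ⟨h1, h2⟩
    have hz := big hx hy h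
    have sq4 : ∀ {w n : ℕ}, Odd w → n % 2 = 0 → w ^ n % 4 = 1 := by
      intro w n hw hn
      rw [show n = 2 * (n / 2) by omega, pow_mul, Nat.pow_mod]
      have : w ^ 2 % 4 = 1 := by
        obtain ⟨k, rfl⟩ := hw
        have : (2 * k + 1) ^ 2 = 4 * (k ^ 2 + k) + 1 := by ring
        omega
      rw [this]; simp
    have e1 := sq4 hao h1
    have e2 := sq4 hbo h2
    obtain ⟨s, rfl⟩ := Nat.exists_eq_add_of_le' hz
    rw [pow_add] at h
    omega
  have conv : ∀ {x y z : ℕ}, 0 < x → 0 < y → a ^ x + b ^ y = 2 ^ z →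
      (a : ℤ) ^ x + (b : ℤ) ^ y = 2 ^ 2 * ((2 : ℕ) : ℤ) ^ (z - 2) := by
    intro x y z hx hy h
    have hz := big hx hy h
    push_cast
    rw [show (4 : ℤ) = 2 ^ 2 by norm_num, ← pow_add, show 2 + (z - 2) = z by omega]
    exact_mod_cast h
  have hz := big hx hy h
  have hz' := big hx' hy' h'
  have n1 := noee hx hy h
  have n2 := noee hx' hy' h'
  have H : (a : ℤ) ^ x + (b : ℤ) ^ y = 2 ^ z := by exact_mod_cast h
  have H' : (a : ℤ) ^ x' + (b : ℤ) ^ y' = 2 ^ z' := by exact_mod_cast h'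
  by_cases same : x % 2 = x' % 2 ∧ y % 2 = y' % 2
  · obtain ⟨e1, e2, e3⟩ := M.class_unique hex hx hy hx' hy' (by omega) (by omega) same.1 same.2
      (conv hx hy h) (conv hx' hy' h')
    exact ⟨e1, e2, by omega⟩
  exfalso
  have G : (b : ℤ) ^ y + (a : ℤ) ^ x = 2 ^ z := by rw [add_comm]; exact H
  have G' : (b : ℤ) ^ y' + (a : ℤ) ^ x' = 2 ^ z' := by rw [add_comm]; exact H'
  rcases Nat.mod_two_eq_zero_or_one x with p1 | p1 <;>
  rcases Nat.mod_two_eq_zero_or_one y with p2 | p2 <;>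
  rcases Nat.mod_two_eq_zero_or_one x' with p3 | p3 <;>
  rcases Nat.mod_two_eq_zero_or_one y' with p4 | p4 <;> try omega
  · exact oe_eo haz hbz ha1 hb1 p3 p4 hy' H' p1 p2 hx H
  · exact oe_oo hbz haz hb1 ha1 p2 p1 hx G p4 p3 G'
  · exact oe_eo haz hbz ha1 hb1 p1 p2 hy H p3 p4 hx' H'
  · exact oe_oo haz hbz ha1 hb1 p1 p2 hy H p3 p4 H'
  · exact oe_oo hbz haz hb1 ha1 p4 p3 hx' G' p2 p1 G
  · exact oe_oo haz hbz ha1 hb1 p3 p4 hy' H' p1 p2 H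

theorem two_pow_mod3 (n : ℕ) : (n % 2 = 0 ∧ 2 ^ n % 3 = 1) ∨ (n % 2 = 1 ∧ 2 ^ n % 3 = 2) := by
  rw [pow_per (T := 2) n (by norm_num)]
  rcases Nat.mod_two_eq_zero_or_one n with h | h <;> rw [h] <;> simp

theorem prime_eq_of_dvd_pow {p q n : ℕ} (hp : p.Prime) (hq : q.Prime) (h : p ∣ q ^ n) : q = p :=
  ((Nat.prime_dvd_prime_iff_eq hp hq).1 (hp.dvd_of_dvd_pow h)).symm

theorem three_cases {p q l w n : ℕ} (hp : p.Prime) (hq : q.Prime) (hl : 0 < l) (hw : 0 < w)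
    (h1 : p ^ l + 1 = 2 ^ n) (h2 : q ^ w = 2 ^ n + 1) : (p = 3 ∧ q = 5) ∨ (p = 7 ∧ q = 3) := by
  have hpl := Nat.le_self_pow hl.ne' p
  have hp2 := hp.two_le
  rcases two_pow_mod3 n with ⟨-, h3⟩ | ⟨-, h3⟩
  · have : p = 3 := prime_eq_of_dvd_pow Nat.prime_three hp (n := l) (by omega)
    subst this
    have h4 := three_pow_add _ _ h1
    interval_cases n
    · omega
    · omega
    · left; exact ⟨rfl, prime_of_pow_eq (by norm_num) hq hw (by omega)⟩
  · have : q = 3 := prime_eq_of_dvd_pow Nat.prime_three hq (n := w) (by omega)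
    subst this
    rcases three_pow_sub _ _ h2 with rfl | rfl
    · omega
    · right; exact ⟨prime_of_pow_eq (by norm_num) hp hl (by omega), rfl⟩

theorem lemmaA {p q x y z : ℕ} (hp : p.Prime) (hq : q.Prime) (hq2 : q ≠ 2) (hp2 : p ≠ 2)
    (hy : 0 < y) (hz : 0 < z)
    (hy2 : y % 2 = 0) (hz2 : z % 2 = 0) (h : 2 ^ x + p ^ y = q ^ z) :
    (p = 3 ∧ q = 5) ∨ (p = 7 ∧ q = 3) := by
  obtain ⟨l, rfl⟩ : ∃ l, y = 2 * l := ⟨y / 2, by omega⟩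
  obtain ⟨w, rfl⟩ : ∃ l, z = 2 * l := ⟨z / 2, by omega⟩
  rw [mul_comm 2 l, mul_comm 2 w, pow_mul, pow_mul] at h
  have hqo : Odd (q ^ w) := (hq.odd_of_ne_two hq2).pow
  have hpo : Odd (p ^ l) := (hp.odd_of_ne_two hp2).pow
  have hlt : p ^ l < q ^ w := by
    have : 0 < 2 ^ x := by positivity
    exact lt_of_pow_lt_pow_left₀ 2 (by positivity) (by omega)
  obtain ⟨d, hd⟩ := Nat.exists_eq_add_of_le hlt.le
  rw [hd] at h
  have hx : 2 ^ x = d * (2 * p ^ l + d) := by nlinarith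
  have hd0 : d ≠ 0 := by omega
  obtain ⟨i, -, hi⟩ := (Nat.dvd_prime_pow Nat.prime_two).1 (Dvd.intro _ hx.symm)
  obtain ⟨j, -, hj⟩ := (Nat.dvd_prime_pow Nat.prime_two).1 (Dvd.intro_left _ hx.symm)
  have hde : d % 2 = 0 := by
    rw [Nat.odd_iff] at hqo hpo; omega
  have hi1 : i = 1 := by
    have hi0 : i ≠ 0 := by rintro rfl; simp at hi; omega
    by_contra hi1
    obtain ⟨i', rfl⟩ := Nat.exists_eq_add_of_le' (by omega : 2 ≤ i)
    have hij : i' + 2 < j := by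
      apply (Nat.pow_lt_pow_iff_right (by norm_num : 1 < 2)).1
      rw [← hi, ← hj]
      have := hp.pos
      have : 0 < p ^ l := by positivity
      omega
    obtain ⟨j', rfl⟩ := Nat.exists_eq_add_of_le' (by omega : 2 ≤ j)
    rw [pow_add] at hi hj
    rw [Nat.odd_iff] at hqo hpo
    omega
  subst hi1
  have hj3 : 2 ≤ j := by
    by_contra hj3
    have : 2 ^ j ≤ 2 ^ 1 := Nat.pow_le_pow_right (by norm_num) (by omega)
    have := hp.pos
    have : 0 < p ^ l := by positivity
    omega
  obtain ⟨n, rfl⟩ := Nat.exists_eq_add_of_le' (by omega : 1 ≤ j)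
  rw [pow_succ] at hj
  exact three_cases hp hq (l := l) (w := w) (n := n) (by omega) (by omega) (by omega) (by omega)

theorem lemmaB {p q x y z : ℕ} (hp : p.Prime) (hq : q.Prime) (hpq : p ≠ q) (hp2 : p ≠ 2)
    (hx : 0 < x) (hz : 0 < z) 
    (hx2 : x % 2 = 0) (hy2 : y % 2 = 1) (hz2 : z % 2 = 0) (h : 2 ^ x + p ^ y = q ^ z) :
    (p = 5 ∧ q = 3) ∨ (p = 17 ∧ q = 3) := by
  obtain ⟨m, rfl⟩ : ∃ l, x = 2 * l := ⟨x / 2, by omega⟩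
  obtain ⟨w, rfl⟩ : ∃ l, z = 2 * l := ⟨z / 2, by omega⟩
  rw [mul_comm 2 m, mul_comm 2 w, pow_mul, pow_mul] at h
  have hlt : 2 ^ m < q ^ w := by
    have := hp.pos
    have : 0 < p ^ y := by positivity
    exact lt_of_pow_lt_pow_left₀ 2 (by positivity) (by omega)
  obtain ⟨d, hd⟩ := Nat.exists_eq_add_of_le hlt.le
  rw [hd] at h
  have hx : p ^ y = d * (2 * 2 ^ m + d) := by nlinarith
  obtain ⟨i, -, hi⟩ := (Nat.dvd_prime_pow hp).1 (Dvd.intro _ hx.symm)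
  obtain ⟨j, -, hj⟩ := (Nat.dvd_prime_pow hp).1 (Dvd.intro_left _ hx.symm)
  have hd0 : 0 < d := by omega
  have h2m : 0 < 2 ^ m := by positivity
  have hi0 : i = 0 := by
    by_contra hi0
    have h1 : p ∣ d := hi ▸ dvd_pow_self p hi0
    have hj0 : j ≠ 0 := by rintro rfl; simp at hj; omega
    have h2 : p ∣ 2 * 2 ^ m + d := hj ▸ dvd_pow_self p hj0
    have h3 : p ∣ 2 * 2 ^ m := (Nat.dvd_add_left h1).1 h2
    rw [← pow_succ'] at h3
    exact hp2 ((Nat.prime_dvd_prime_iff_eq hp Nat.prime_two).1 (hp.dvd_of_dvd_pow h3))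
  subst hi0
  simp only [pow_zero] at hi
  subst hi
  rw [one_mul] at hx
  have hm : 0 < m := by omega
  have hw : 0 < w := by omega
  rcases two_pow_mod3 m with ⟨h4, h3⟩ | ⟨h4, h3⟩
  · have : p = 3 := prime_eq_of_dvd_pow Nat.prime_three hp (n := y) (by omega)
    subst this
    rw [← pow_succ'] at hx
    rcases three_pow_sub _ _ hx with h5 | h5
    · omega
    · exfalso
      rw [h5] at hx
      have : y = 2 := Nat.pow_right_injective (le_refl 2 |>.trans (by norm_num : 2 ≤ 3)) (by simpa using hx)
      omega
  · have : q = 3 := prime_eq_of_dvd_pow Nat.prime_three hq (n := w) (by omega)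
    subst this
    rcases three_pow_sub _ _ hd with rfl | rfl
    · left; exact ⟨prime_of_pow_eq (by norm_num) hp (by omega) (by omega : p ^ y = 5), rfl⟩
    · right; exact ⟨prime_of_pow_eq (by norm_num) hp (by omega) (by omega : p ^ y = 17), rfl⟩

def pel : ℕ → ℕ × ℕ
  | 0 => (1, 1)
  | n + 1 => (2 * (pel n).1 + 3 * (pel n).2, (pel n).1 + 2 * (pel n).2)

def pelm : ℕ → ℕ × ℕ
  | 0 => (1, 1)
  | n + 1 => ((2 * (pelm n).1 + 3 * (pelm n).2) % 153, ((pelm n).1 + 2 * (pelm n).2) % 153)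

theorem pelm_eq (n : ℕ) : (pel n).1 % 153 = (pelm n).1 ∧ (pel n).2 % 153 = (pelm n).2 := by
  induction n with
  | zero => simp [pel, pelm]
  | succ n ih => simp only [pel, pelm]; omega

theorem pelm_per (n : ℕ) : pelm (n + 18) = pelm n := by
  induction n with
  | zero => decide
  | succ n ih =>
    rw [show n + 1 + 18 = (n + 18) + 1 by ring, pelm, ih]; rfl

theorem pelm_per' (n : ℕ) : pelm n = pelm (n % 18) := by
  have : ∀ k r, pelm (18 * k + r) = pelm r := by
    intro k r
    induction k with
    | zero => simp
    | succ k ih => rw [show 18 * (k + 1) + r = (18 * k + r) + 18 by ring, pelm_per, ih]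
  conv_lhs => rw [← Nat.div_add_mod n 18]
  exact this _ _

theorem pel_nine (n : ℕ) (h : 9 ∣ (pel n).2) : 17 ∣ (pel n).2 := by
  have h1 := (pelm_eq n).2
  rw [pelm_per'] at h1
  have h2 : n % 18 < 18 := Nat.mod_lt _ (by norm_num)
  have key : ∀ r < 18, 9 ∣ (pelm r).2 → 17 ∣ (pelm r).2 := by decide
  have := key _ h2
  omega

theorem pel_all (Y : ℕ) : ∀ X, 0 < Y → X ^ 2 + 2 = 3 * Y ^ 2 → ∃ n, pel n = (X, Y) := by
  induction Y using Nat.strong_induction_on with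
  | _ Y IH =>
  intro X hY h
  by_cases hY1 : Y = 1
  · subst hY1
    have : X = 1 := by nlinarith
    exact ⟨0, by rw [this]; rfl⟩
  · have hY2 : 2 ≤ Y := by omega
    have h1 : 3 * Y < 2 * X := by nlinarith
    have h2 : X < 2 * Y := by nlinarith
    have h3 : Y < X := by nlinarith
    obtain ⟨Y', hY'⟩ := Nat.exists_eq_add_of_le h2.le
    obtain ⟨X', hX'⟩ := Nat.exists_eq_add_of_le h1.le
    have hX : X = 2 * X' + 3 * Y' := by omega
    have hYY : Y = X' + 2 * Y' := by omega
    obtain ⟨n, hn⟩ := IH Y' (by omega) X' (by omega) (by rw [hX, hYY] at h; nlinarith)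
    exact ⟨n + 1, by rw [pel, hn, hX, hYY]⟩

theorem lemmaL1 {u n : ℕ} (hn : n % 2 = 1) (h : u ^ 2 + 2 = 3 ^ n) : n = 1 ∨ n = 3 := by
  by_contra hne
  obtain ⟨k, rfl⟩ : ∃ k, n = 2 * k + 1 := ⟨n / 2, by omega⟩
  have h1 : u ^ 2 + 2 = 3 * (3 ^ k) ^ 2 := by
    rw [h, pow_succ, mul_comm 2 k, pow_mul]; ring
  obtain ⟨m, hm⟩ := pel_all (3 ^ k) u (by positivity) h1
  have h2 := pel_nine m
  rw [hm] at h2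
  have h3 : 9 ∣ 3 ^ k := by
    rw [show 9 = 3 ^ 2 by norm_num]
    exact pow_dvd_pow 3 (by omega)
  have := (by norm_num : Nat.Prime 17).dvd_of_dvd_pow (h2 h3)
  omega

theorem sq_mod8 {w n : ℕ} (hw : Odd w) (hn : n % 2 = 0) : w ^ n % 8 = 1 := by
  rw [show n = 2 * (n / 2) by omega, pow_mul, Nat.pow_mod]
  have : w ^ 2 % 8 = 1 := by
    have h8 : w % 8 = 1 ∨ w % 8 = 3 ∨ w % 8 = 5 ∨ w % 8 = 7 := by
      rw [Nat.odd_iff] at hw; omega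
    rw [Nat.pow_mod]
    rcases h8 with h | h | h | h <;> rw [h]
  rw [this]; simp

theorem odd_mod8 {w n : ℕ} (hw : Odd w) (hn : n % 2 = 1) : w ^ n % 8 = w % 8 := by
  obtain ⟨m, rfl⟩ : ∃ m, n = 2 * m + 1 := ⟨n / 2, by omega⟩
  rw [pow_succ, Nat.mul_mod, sq_mod8 hw (by omega)]; simp

theorem sq_mod3 {w n : ℕ} (hw : w % 3 ≠ 0) (hn : n % 2 = 0) : w ^ n % 3 = 1 := by
  rw [show n = 2 * (n / 2) by omega, pow_mul, Nat.pow_mod]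
  have : w ^ 2 % 3 = 1 := by
    have h8 : w % 3 = 1 ∨ w % 3 = 2 := by omega
    rw [Nat.pow_mod]
    rcases h8 with h | h <;> rw [h]
  rw [this]; simp

theorem odd_mod3 {w n : ℕ} (hn : n % 2 = 1) : w ^ n % 3 = w % 3 := by
  obtain ⟨m, rfl⟩ : ∃ m, n = 2 * m + 1 := ⟨n / 2, by omega⟩
  by_cases hw : w % 3 = 0
  · rw [hw, Nat.pow_mod, hw]; simp
  rw [pow_succ, Nat.mul_mod, sq_mod3 hw (by omega)]; simp

theorem lemmaC {p q x y z : ℕ} (hp : p.Prime) (hq : q.Prime) (hp2 : p ≠ 2) (hp3 : p ≠ 3)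
    (hy : 0 < y) (hz : 0 < z) 
    (hx2 : x % 2 = 1) (hy2 : y % 2 = 0) (h : 2 ^ x + p ^ y = q ^ z) :
    (p = 5 ∧ q = 3) ∨ (p = 7 ∧ q = 3) := by
  have hpm : p % 3 ≠ 0 := fun h0 =>
    hp3 ((Nat.prime_dvd_prime_iff_eq Nat.prime_three hp).1 (Nat.dvd_of_mod_eq_zero h0)).symm
  have e1 := sq_mod3 hpm hy2
  have e2 := two_pow_mod3 x
  have : q = 3 := prime_eq_of_dvd_pow Nat.prime_three hq (n := z) (by omega)
  subst this
  rcases Nat.mod_two_eq_zero_or_one z with hz2 | hz2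
  · have := lemmaA hp hq (by norm_num) hp2 hy hz hy2 hz2 h
    omega
  · have e3 := sq_mod8 (hp.odd_of_ne_two hp2) hy2
    have e4 : 3 ^ z % 8 = 3 := odd_mod8 (by decide) hz2
    have hx1 : x = 1 := by
      by_contra hx1
      obtain ⟨x', rfl⟩ := Nat.exists_eq_add_of_le' (by omega : 3 ≤ x)
      rw [pow_add] at h
      omega
    subst hx1
    obtain ⟨l, rfl⟩ : ∃ l, y = l * 2 := ⟨y / 2, by omega⟩
    rw [pow_mul] at h
    have hpl := Nat.le_self_pow (by omega : l ≠ 0) p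
    have := hp.two_le
    rcases lemmaL1 hz2 (by rw [← h]; ring : (p ^ l) ^ 2 + 2 = 3 ^ z) with rfl | rfl
    · nlinarith
    · left
      have h5 : p ^ l = 5 := by nlinarith
      exact ⟨prime_of_pow_eq (by norm_num) hp (by omega) h5, rfl⟩

theorem thue (q : ℕ) (hq : q.Prime) (s t : ℤ) : ∃ X Y : ℤ, (X ≠ 0 ∨ Y ≠ 0) ∧ X ^ 2 < q ∧ Y ^ 2 < q ∧
    (q : ℤ) ∣ t * Y - s * X := by
  classical
  have := Fact.mk hq
  set k := Nat.sqrt q with hk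
  let S := Finset.range (k + 1) ×ˢ Finset.range (k + 1)
  have hcard : (Finset.univ : Finset (ZMod q)).card < S.card := by
    rw [Finset.card_univ, ZMod.card, Finset.card_product, Finset.card_range]
    have := Nat.lt_succ_sqrt q
    simpa [hk] using this
  obtain ⟨⟨x1, y1⟩, h1, ⟨x2, y2⟩, h2, hne, heq⟩ := Finset.exists_ne_map_eq_of_card_lt_of_maps_to
    hcard (f := fun w => ((t * (w.2 : ℤ) - s * (w.1 : ℤ) : ℤ) : ZMod q)) (fun _ _ => Finset.mem_univ _)
  simp only [S, Finset.mem_product, Finset.mem_range] at h1 h2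
  have hkq : k * k < q := by
    have := Nat.sqrt_le q
    rw [← hk] at this
    refine lt_of_le_of_ne this ?_
    intro h
    exact (Nat.prime_iff.1 hq).not_isSquare ⟨k, h.symm⟩
  have hkz : (k : ℤ) ^ 2 < q := by rw [sq]; exact_mod_cast hkq
  have sqb : ∀ u v : ℕ, u < k + 1 → v < k + 1 → ((u : ℤ) - v) ^ 2 < q := by
    intro u v hu hv
    refine lt_of_le_of_lt ?_ hkz
    apply sq_le_sq'
    · omega
    · omega
  refine ⟨(x1 : ℤ) - x2, (y1 : ℤ) - y2, ?_, sqb _ _ h1.1 h2.1, sqb _ _ h1.2 h2.2, ?_⟩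
  · by_contra hcon
    push Not at hcon
    apply hne
    ext <;> simp <;> omega
  · have h3 := (ZMod.intCast_eq_intCast_iff_dvd_sub _ _ q).1 heq.symm
    simp only at h3
    convert h3 using 1
    ring

theorem int_sq_mod3 (X : ℤ) : (X % 3 = 0 ∧ X ^ 2 % 3 = 0) ∨ (X ^ 2 % 3 = 1) := by
  have h : X % 3 = 0 ∨ X % 3 = 1 ∨ X % 3 = 2 := by omega
  rcases h with h | h | h <;> simp [pow_two, Int.mul_emod, h]

theorem int_sq_mod2 (X : ℤ) : (X % 2 = 0 ∧ X ^ 2 % 2 = 0) ∨ (X ^ 2 % 2 = 1) := by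
  have h : X % 2 = 0 ∨ X % 2 = 1 := by omega
  rcases h with h | h <;> simp [pow_two, Int.mul_emod, h]

theorem rep12 {q : ℕ} (hq : q.Prime) (hq3 : q % 3 = 2) (s : ℤ)
    (h : (q : ℤ) ∣ 2 + s ^ 2) : ∃ X Y : ℤ, 2 * X ^ 2 + 9 * Y ^ 2 = q := by
  obtain ⟨X, Y, hne, hX, hY, hd⟩ := thue q hq s 1
  have hd2 : (q : ℤ) ∣ Y ^ 2 + 2 * X ^ 2 := by
    have h1 : Y ^ 2 + 2 * X ^ 2 = (1 * Y - s * X) * (Y + s * X) + X ^ 2 * (2 + s ^ 2) := by ring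
    rw [h1]
    exact dvd_add (Dvd.dvd.mul_right hd _) (Dvd.dvd.mul_left h _)
  have hq3' : (q : ℤ) % 3 = 2 := by omega
  have key : ∀ X Y : ℤ, 2 * X ^ 2 + Y ^ 2 = q → ∃ X Y : ℤ, 2 * X ^ 2 + 9 * Y ^ 2 = q := by
    intro X Y hXY
    rcases int_sq_mod3 Y with ⟨h1, -⟩ | h1
    · obtain ⟨Y', rfl⟩ := Int.dvd_of_emod_eq_zero h1
      exact ⟨X, Y', by rw [← hXY]; ring⟩
    · rcases int_sq_mod3 X with ⟨-, h2⟩ | h2 <;> omega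
  obtain ⟨k, hk⟩ := hd2
  have hqp : (0 : ℤ) < q := by exact_mod_cast hq.pos
  have hpos : 0 < Y ^ 2 + 2 * X ^ 2 := by
    rcases hne with h | h <;> positivity
  have hk0 : 0 < k := by
    rw [hk] at hpos; exact pos_of_mul_pos_right hpos hqp.le
  have hk3 : k < 3 := by
    by_contra hc
    push Not at hc
    nlinarith
  have : k = 1 ∨ k = 2 := by omega
  rcases this with rfl | rfl
  · exact key X Y (by linarith)
  · rcases int_sq_mod2 Y with ⟨h1, -⟩ | h1
    · obtain ⟨Y', rfl⟩ := Int.dvd_of_emod_eq_zero h1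
      exact key Y' X (by linarith)
    · omega

theorem rep11 {q : ℕ} (hq : q.Prime) (hq3 : q % 3 = 2) (s t : ℤ) (ht : ¬ (q : ℤ) ∣ t)
    (h : (q : ℤ) ∣ 2 * s ^ 2 + 3 * t ^ 2) : ∃ X Y : ℤ, 2 * X ^ 2 + 3 * Y ^ 2 = q := by
  obtain ⟨X, Y, hne, hX, hY, hd⟩ := thue q hq s t
  have hqi := Nat.prime_iff_prime_int.1 hq
  have hd2 : (q : ℤ) ∣ 2 * Y ^ 2 + 3 * X ^ 2 := by
    have h1 : t ^ 2 * (2 * Y ^ 2 + 3 * X ^ 2) =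
      (t * Y - s * X) * (2 * (t * Y + s * X)) + X ^ 2 * (2 * s ^ 2 + 3 * t ^ 2) := by ring
    have h2 : (q : ℤ) ∣ t ^ 2 * (2 * Y ^ 2 + 3 * X ^ 2) := by
      rw [h1]
      exact dvd_add (Dvd.dvd.mul_right hd _) (Dvd.dvd.mul_left h _)
    rcases hqi.dvd_or_dvd h2 with h3 | h3
    · exact absurd (hqi.dvd_of_dvd_pow h3) ht
    · exact h3
  have hq3' : (q : ℤ) % 3 = 2 := by omega
  obtain ⟨k, hk⟩ := hd2
  have hqp : (0 : ℤ) < q := by exact_mod_cast hq.pos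
  have hpos : 0 < 2 * Y ^ 2 + 3 * X ^ 2 := by
    rcases hne with h | h <;> positivity
  have hk0 : 0 < k := by
    rw [hk] at hpos; exact pos_of_mul_pos_right hpos hqp.le
  have hk3 : k < 5 := by
    by_contra hc
    push Not at hc
    nlinarith
  have : k = 1 ∨ k = 2 ∨ k = 3 ∨ k = 4 := by omega
  rcases this with rfl | rfl | rfl | rfl
  · exact ⟨Y, X, by linarith⟩
  · exfalso
    rcases int_sq_mod2 X with ⟨h1, -⟩ | h1
    · obtain ⟨X', rfl⟩ := Int.dvd_of_emod_eq_zero h1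
      rw [mul_pow] at hk
      rcases int_sq_mod3 Y with ⟨-, h2⟩ | h2 <;> omega
    · omega
  · exfalso
    rcases int_sq_mod3 Y with ⟨h1, -⟩ | h1
    · obtain ⟨Y', rfl⟩ := Int.dvd_of_emod_eq_zero h1
      rw [mul_pow] at hk
      rcases int_sq_mod3 X with ⟨-, h2⟩ | h2 <;> omega
    · omega
  · rcases int_sq_mod2 X with ⟨h1, -⟩ | h1
    · obtain ⟨X', rfl⟩ := Int.dvd_of_emod_eq_zero h1
      rcases int_sq_mod2 Y with ⟨h1, -⟩ | h1
      · obtain ⟨Y', rfl⟩ := Int.dvd_of_emod_eq_zero h1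
        exact ⟨Y', X', by linarith⟩
      · rw [mul_pow] at hk
        omega
    · omega

theorem pow_even_mod {w n m : ℕ} (h : w ^ 2 % m = 1 % m) (hn : n % 2 = 0) : w ^ n % m = 1 % m := by
  rw [pow_per (T := 2) n h, hn, pow_zero]

theorem pow_odd_mod {w n m : ℕ} (h : w ^ 2 % m = 1 % m) (hn : n % 2 = 1) : w ^ n % m = w % m := by
  rw [pow_per (T := 2) n h, hn, pow_one]

theorem E3fin {l i j : ℕ} (h1 : 2 ^ 1 + 3 ^ (2 + 2 * l) = 2 ^ (1 + 2 * i) + 3 ^ (1 + 2 * (1 + j))) :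
    False := by
  have p9 : 3 ^ (2 + 2 * l) % 9 = 0 := by rw [pow_add]; omega
  have q9 : 3 ^ (1 + 2 * (1 + j)) % 9 = 0 := by
    rw [show 1 + 2 * (1 + j) = 2 + (1 + 2 * j) by ring, pow_add]; omega
  have p7 := pow_per (a := 3) (T := 6) (m := 7) (2 + 2 * l) (by norm_num)
  have q7 := pow_per (a := 3) (T := 6) (m := 7) (1 + 2 * (1 + j)) (by norm_num)
  have r7 := pow_per (a := 2) (T := 6) (m := 7) (1 + 2 * i) (by norm_num)
  have r9 := pow_per (a := 2) (T := 6) (m := 9) (1 + 2 * i) (by norm_num)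
  have t : (1 + 2 * i) % 6 = 1 ∨ (1 + 2 * i) % 6 = 3 ∨ (1 + 2 * i) % 6 = 5 := by omega
  have t2 : (2 + 2 * l) % 6 = 0 ∨ (2 + 2 * l) % 6 = 2 ∨ (2 + 2 * l) % 6 = 4 := by omega
  have t3 : (1 + 2 * (1 + j)) % 6 = 1 ∨ (1 + 2 * (1 + j)) % 6 = 3 ∨ (1 + 2 * (1 + j)) % 6 = 5 := by
    omega
  generalize (1 + 2 * i) % 6 = T at *
  generalize (2 + 2 * l) % 6 = T2 at *
  generalize (1 + 2 * (1 + j)) % 6 = T3 at *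
  generalize 2 ^ (1 + 2 * i) = A at *
  generalize 3 ^ (2 + 2 * l) = B at *
  generalize 3 ^ (1 + 2 * (1 + j)) = C at *
  have t1 : T = 1 := by
    rcases t with t | t | t <;> rw [t] at r9 <;> norm_num at r9 <;> omega
  subst t1
  rcases t2 with rfl | rfl | rfl <;> rcases t3 with rfl | rfl | rfl <;> norm_num at p7 q7 r7 h1 <;>
    omega

theorem E3 {q x1 y1 z1 x2 y2 z2 : ℕ} (hq : q.Prime) (hq2 : q ≠ 2) (hq3 : q ≠ 3) (hq11 : q ≠ 11)
    (hx1 : x1 % 2 = 1) (hy1 : 0 < y1) (hy1' : y1 % 2 = 0) (hz1 : z1 % 2 = 1)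
    (hx2 : x2 % 2 = 1) (hy2 : y2 % 2 = 1) (hz2 : z2 % 2 = 1)
    (h1 : 2 ^ x1 + 3 ^ y1 = q ^ z1) (h2 : 2 ^ x2 + 3 ^ y2 = q ^ z2) : False := by
  have hqo := hq.odd_of_ne_two hq2
  have a1 := odd_mod8 hqo hz1
  have a2 := odd_mod8 hqo hz2
  have b1 : 3 ^ y1 % 8 = 1 := pow_even_mod (by norm_num) hy1'
  have b2 : 3 ^ y2 % 8 = 3 := pow_odd_mod (by norm_num) hy2
  have c8 : ∀ n, n % 2 = 1 → n = 1 ∨ (3 ≤ n ∧ 2 ^ n % 8 = 0) := by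
    intro n hn
    rcases (by omega : n = 1 ∨ 3 ≤ n) with h | h
    · exact Or.inl h
    · obtain ⟨k, rfl⟩ := Nat.exists_eq_add_of_le h
      right; rw [pow_add]; omega
  obtain ⟨rfl, hx23, hx28⟩ : x1 = 1 ∧ 3 ≤ x2 ∧ 2 ^ x2 % 8 = 0 := by
    rcases c8 x1 hx1 with rfl | ⟨h3, h4⟩ <;> rcases c8 x2 hx2 with rfl | ⟨h5, h6⟩
    · exfalso; omega
    · exact ⟨rfl, h5, h6⟩
    · exfalso; omega
    · exfalso; omega
  have hM : Mode 2 3 q 1 2 := ⟨Nat.prime_two, Nat.prime_three, hq, by norm_num, hq2.symm, hq3.symm,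
    Or.inl ⟨rfl, rfl, by have := hq.two_le; omega, Or.inl rfl⟩⟩
  have hex : Exc 2 3 q := by
    constructor <;> omega
  obtain ⟨l, rfl⟩ : ∃ l, y1 = 2 + 2 * l := ⟨(y1 - 2) / 2, by omega⟩
  obtain ⟨i, rfl⟩ : ∃ l, x2 = 1 + 2 * l := ⟨(x2 - 1) / 2, by omega⟩
  obtain ⟨j, rfl⟩ : ∃ l, y2 = 1 + 2 * l := ⟨(y2 - 1) / 2, by omega⟩
  have h1z : (2 : ℤ) ^ 1 + 3 ^ (2 + 2 * l) = q ^ z1 := by exact_mod_cast h1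
  have h2z : (2 : ℤ) ^ (1 + 2 * i) + 3 ^ (1 + 2 * j) = q ^ z2 := by exact_mod_cast h2
  have hq3' : q % 3 = 2 := by
    have t1 : 3 ^ (2 + 2 * l) % 3 = 0 := by rw [pow_add]; omega
    have : q % 3 = 0 ∨ q % 3 = 1 ∨ q % 3 = 2 := by omega
    rcases this with h | h | h
    · exact absurd ((Nat.prime_dvd_prime_iff_eq Nat.prime_three hq).1 (Nat.dvd_of_mod_eq_zero h)).symm hq3
    · have : q ^ z1 % 3 = 1 := by rw [Nat.pow_mod, h]; simp
      omega
    · exact h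
  have hz1' : z1 = 1 := by
    obtain ⟨X, Y, hXY⟩ := rep12 hq hq3' (3 ^ (1 + l)) (by
      have : (2 : ℤ) + (3 ^ (1 + l)) ^ 2 = q ^ z1 := by rw [← h1z]; ring
      rw [this]; exact dvd_pow_self _ (by omega))
    have := hM.class_min hex (α := 1) (β := 2) (i := 0) (j := l) (k := z1) (m := 1) (by norm_num)
      (by norm_num) (by omega) (by push_cast; linarith) (u := X) (v := Y) (by push_cast; linarith)
    omega
  have hz2' : z2 = 1 := by
    obtain ⟨X, Y, hXY⟩ := rep11 hq hq3' (2 ^ i) (3 ^ j)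
      (by have := Mode.prime_not_dvd (n := j) hq Nat.prime_three hq3.symm; exact_mod_cast this) (by
      have : (2 : ℤ) * (2 ^ i) ^ 2 + 3 * (3 ^ j) ^ 2 = q ^ z2 := by rw [← h2z]; ring
      rw [this]; exact dvd_pow_self _ (by omega))
    have := hM.class_min hex (α := 1) (β := 1) (i := i) (j := j) (k := z2) (m := 1) (by norm_num)
      (by norm_num) (by omega) (by push_cast; linarith) (u := X) (v := Y) (by push_cast; linarith)
    omega
  subst hz1' hz2'
  rw [← h2] at h1
  rcases Nat.eq_zero_or_pos j with rfl | hj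
  · have t := three_pow_sub (2 + 2 * l) (1 + 2 * i) (by norm_num at h1; omega)
    rcases t with t | t
    · omega
    · have : i = 1 := by omega
      subst this
      norm_num at h2
      omega
  · obtain ⟨j', rfl⟩ : ∃ j', j = 1 + j' := ⟨j - 1, by omega⟩
    exact E3fin h1

/-- Powers of `(s+t)^2 = A - 1 + 2 s t`. -/
def XYq (A : ℤ) : ℕ → ℤ × ℤ
  | 0 => (1, 0)
  | m + 1 => ((A - 1) * (XYq A m).1 - 4 * A * (XYq A m).2, (A - 1) * (XYq A m).2 + (XYq A m).1)

theorem XY_ST (A : ℤ) (m : ℕ) : (STq A 1 m).1 = (XYq A m).1 - 2 * (XYq A m).2 ∧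
    (STq A 1 m).2 = (XYq A m).1 + 2 * A * (XYq A m).2 := by
  induction m with
  | zero => simp [STq, XYq]
  | succ m ih =>
    obtain ⟨h1, h2⟩ := ih
    simp only [STq, XYq, h1, h2]
    constructor <;> ring

theorem XY_add (A : ℤ) (m n : ℕ) :
    (XYq A (m + n)).1 = (XYq A m).1 * (XYq A n).1 - 4 * A * ((XYq A m).2 * (XYq A n).2) ∧
    (XYq A (m + n)).2 = (XYq A m).1 * (XYq A n).2 + (XYq A m).2 * (XYq A n).1 := by
  induction n with
  | zero => simp [XYq]
  | succ n ih =>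
    obtain ⟨h1, h2⟩ := ih
    rw [show m + (n + 1) = (m + n) + 1 by ring]
    simp only [XYq, h1, h2]
    constructor <;> ring

theorem XY_norm (A : ℤ) (m : ℕ) :
    (XYq A m).1 ^ 2 + 4 * A * (XYq A m).2 ^ 2 = (A + 1) ^ (2 * m) := by
  induction m with
  | zero => simp [XYq]
  | succ m ih =>
    rw [show 2 * (m + 1) = 2 * m + 2 by ring, pow_add, ← ih]
    simp only [XYq]
    ring

theorem XY_par (D : ℤ) (m : ℕ) : (XYq (4 * D) m).1 % 2 = 1 ∧ (XYq (4 * D) m).2 % 2 = m % 2 := by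
  induction m with
  | zero => simp [XYq]
  | succ m ih =>
    obtain ⟨h1, h2⟩ := ih
    simp only [XYq]
    have e1 : (4 * D - 1) * (XYq (4 * D) m).1 - 4 * (4 * D) * (XYq (4 * D) m).2 =
      2 * (2 * D * (XYq (4 * D) m).1 - 2 * (4 * D) * (XYq (4 * D) m).2) - (XYq (4 * D) m).1 := by ring
    have e2 : (4 * D - 1) * (XYq (4 * D) m).2 + (XYq (4 * D) m).1 =
      2 * (2 * D * (XYq (4 * D) m).2) - (XYq (4 * D) m).2 + (XYq (4 * D) m).1 := by ring
    rw [e1, e2]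
    push_cast
    omega

theorem XY_val (D : ℤ) (n k : ℕ) (hn : n % 2 = 1) :
    ∃ w : ℤ, w % 2 = 1 ∧ (XYq (4 * D) (2 ^ k * n)).2 = 2 ^ k * w := by
  induction k with
  | zero =>
    refine ⟨_, ?_, (by simp; rfl)⟩
    have := (XY_par D n).2
    omega
  | succ k ih =>
    obtain ⟨w, hw, h⟩ := ih
    have h1 := (XY_par D (2 ^ k * n)).1
    refine ⟨(XYq (4 * D) (2 ^ k * n)).1 * w, by simp [Int.mul_emod, h1, hw], ?_⟩
    have := (XY_add (4 * D) (2 ^ k * n) (2 ^ k * n)).2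
    rw [show 2 ^ (k + 1) * n = 2 ^ k * n + 2 ^ k * n by ring, this, h]
    ring

theorem two_pow_dvd_aux (D : ℤ) (n k : ℕ) :
    (2 : ℤ) ^ (3 + k) ∣ (4 * D + 1) ^ (2 * (2 ^ k * n)) - 1 := by
  have h : (2 : ℤ) ^ (3 + k) ∣ (4 * D + 1) ^ (2 * 2 ^ k) - 1 := by
    induction k with
    | zero => exact ⟨D * (2 * D + 1), by ring⟩
    | succ k ih =>
      obtain ⟨g, hg⟩ := ih
      have e : (4 * D + 1) ^ (2 * 2 ^ k) = 1 + 2 ^ (3 + k) * g := by linarith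
      refine ⟨g * (1 + 2 ^ (2 + k) * g), ?_⟩
      rw [show 2 * 2 ^ (k + 1) = (2 * 2 ^ k) * 2 by ring, pow_mul, e]
      ring
  rw [show 2 * (2 ^ k * n) = (2 * 2 ^ k) * n by ring, pow_mul]
  exact h.trans (sub_one_dvd_pow_sub_one _ _)

theorem S_even {D : ℤ} {μ : ℕ} (hμ : 0 < μ) (hμ2 : μ % 2 = 0) (h : (STq (4 * D) 1 μ).1 ^ 2 = 1) :
    False := by
  obtain ⟨k, n, hn, rfl⟩ := Nat.exists_eq_two_pow_mul_odd hμ.ne'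
  rw [Nat.odd_iff] at hn
  have hk : k ≠ 0 := by
    rintro rfl
    omega
  obtain ⟨k, rfl⟩ := Nat.exists_eq_succ_of_ne_zero hk
  obtain ⟨w, hw, hy⟩ := XY_val D n (k + 1) hn
  have h1 := (XY_ST (4 * D) (2 ^ (k + 1) * n)).1
  have h2 := XY_norm (4 * D) (2 ^ (k + 1) * n)
  obtain ⟨g, hg⟩ := two_pow_dvd_aux D n (k + 1)
  rw [← h2] at hg
  have h3 : (XYq (4 * D) (2 ^ (k + 1) * n)).1 = (STq (4 * D) 1 (2 ^ (k + 1) * n)).1 +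
    2 * (XYq (4 * D) (2 ^ (k + 1) * n)).2 := by linarith
  simp only [Nat.succ_eq_add_one] at h
  set ε := (STq (4 * D) 1 (2 ^ (k + 1) * n)).1 with hε
  rw [h3, hy] at hg
  have h4 : (2 : ℤ) ^ (3 + k) * (w * (ε + 2 ^ (k + 1) * w * (1 + 4 * D)) - 2 * g) = 0 := by
    have : (ε + 2 * (2 ^ (k + 1) * w)) ^ 2 + 4 * (4 * D) * (2 ^ (k + 1) * w) ^ 2 - 1 -
      2 ^ (3 + (k + 1)) * g = (ε ^ 2 - 1) + 
      (2 : ℤ) ^ (3 + k) * (w * (ε + 2 ^ (k + 1) * w * (1 + 4 * D)) - 2 * g) := by ring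
    rw [h] at this
    linarith
  have h5 : w * (ε + 2 ^ (k + 1) * w * (1 + 4 * D)) - 2 * g = 0 := by
    rcases mul_eq_zero.1 h4 with h | h
    · exact absurd h (by positivity)
    · exact h
  have hεo : ε % 2 = 1 := by
    rcases sq_one_cases h with h | h
    · rw [h]; rfl
    · rw [h]; rfl
  have h6 : (w * (ε + 2 ^ (k + 1) * w * (1 + 4 * D))) % 2 = 1 := by
    rw [Int.mul_emod, hw, show ε + 2 ^ (k + 1) * w * (1 + 4 * D) = ε + 2 * (2 ^ k * w * (1 + 4 * D)) by ring]
    omega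
  omega

theorem sq_res5 (w : ℕ) : w ^ 2 % 5 ≠ 2 := by
  rw [Nat.pow_mod]
  have : w % 5 < 5 := Nat.mod_lt _ (by norm_num)
  interval_cases w % 5 <;> simp

theorem sq_res (m w : ℕ) (hm : 0 < m) : ∃ t < m, w ^ 2 % m = t ^ 2 % m :=
  ⟨w % m, Nat.mod_lt _ hm, by rw [Nat.pow_mod]⟩

theorem five_pow {w r : ℕ} (hr : r % 4 = 3) (hr3 : r % 3 ≠ 0) (h : w ^ 2 + 4 = 5 ^ r) : False := by
  have hr12 : r % 12 = 7 ∨ r % 12 = 11 := by omega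
  rcases hr12 with h12 | h12
  · have m1 := pow_per (a := 5) (T := 72) (m := 73) r (by norm_num)
    have m2 := pow_per (a := 5) (T := 9) (m := 19) r (by norm_num)
    obtain ⟨t1, ht1, e1⟩ := sq_res 73 w (by norm_num)
    obtain ⟨t2, ht2, e2⟩ := sq_res 19 w (by norm_num)
    have h9 : r % 9 = (r % 72) % 9 := by omega
    rw [h9] at m2
    have e3 : (t1 ^ 2 + 4) % 73 = 5 ^ (r % 72) % 73 := by rw [← m1, ← h]; omega
    have e4 : (t2 ^ 2 + 4) % 19 = 5 ^ (r % 72 % 9) % 19 := by rw [← m2, ← h]; omega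
    have key : ∀ R ∈ [7, 19, 31, 43, 55, 67], (∀ t < 73, (t ^ 2 + 4) % 73 ≠ 5 ^ R % 73) ∨
      (∀ t < 19, (t ^ 2 + 4) % 19 ≠ 5 ^ (R % 9) % 19) := by decide +kernel
    have hR : r % 72 ∈ [7, 19, 31, 43, 55, 67] := by
      simp only [List.mem_cons, List.not_mem_nil, or_false]
      omega
    rcases key _ hR with h | h
    · exact h _ ht1 e3
    · exact h _ ht2 e4
  · have m1 := pow_per (a := 5) (T := 6) (m := 7) r (by norm_num)
    rw [show r % 6 = 5 by omega] at m1
    obtain ⟨t1, ht1, e1⟩ := sq_res 7 w (by norm_num)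
    have e3 : (t1 ^ 2 + 4) % 7 = 5 ^ 5 % 7 := by rw [← m1, ← h]; omega
    revert e3
    interval_cases t1 <;> simp

theorem L2b {p q i j e μ : ℕ} (hp : p.Prime) (hq : q.Prime) (hi : 0 < i)
    (hj : 0 < j) (he : e % 2 = 1) (hr : (2 * μ + 1).Prime) (hμ : μ % 2 = 1)
    (h1 : 4 ^ i + 1 = q ^ e) (h2 : 4 ^ i + p ^ (2 * j) = (4 ^ i + 1) ^ (2 * μ + 1)) :
    p = 11 ∧ q = 5 := by
  rw [mul_comm 2 j, pow_mul] at h2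
  rcases Nat.mod_two_eq_zero_or_one i with hi2 | hi2
  · exfalso
    have a1 : 4 ^ i % 5 = 1 := pow_even_mod (by norm_num) hi2
    have a2 : (4 ^ i + 1) ^ (2 * μ + 1) % 5 = 3 := by
      rw [Nat.pow_mod, Nat.add_mod, a1]
      norm_num
      rw [pow_per (T := 4) _ (by norm_num), show (2 * μ + 1) % 4 = 3 by omega]
      norm_num
    exact sq_res5 (p ^ j) (by omega)
  · have a1 : 4 ^ i % 5 = 4 := pow_odd_mod (by norm_num) hi2
    have hq5 : q = 5 := prime_eq_of_dvd_pow (by norm_num) hq (n := e) (by omega)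
    subst hq5
    have a2 : 5 ^ e % 8 = 5 := odd_mod8 (by decide) he
    have hi1 : i = 1 := by
      by_contra hne
      obtain ⟨i', rfl⟩ := Nat.exists_eq_add_of_le (by omega : 2 ≤ i)
      rw [pow_add] at h1
      omega
    subst hi1
    norm_num at h2
    by_cases h3 : (2 * μ + 1) % 3 = 0
    · have : 2 * μ + 1 = 3 := ((Nat.prime_dvd_prime_iff_eq Nat.prime_three hr).1 (Nat.dvd_of_mod_eq_zero h3)).symm
      rw [this] at h2
      have h4 : (p ^ j) ^ 2 = 11 ^ 2 := by norm_num; omega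
      have h5 : p ^ j = 11 := Nat.pow_left_injective (n := 2) (by norm_num) h4
      exact ⟨prime_of_pow_eq (by norm_num) hp hj h5, rfl⟩
    · exact (five_pow (w := p ^ j) (r := 2 * μ + 1) (by omega) h3 (by omega)).elim

theorem L2cfg {q : ℕ} (hq : q.Prime) (hq2 : q ≠ 2) : Cfg 4 1 q 1 2 (fun n => n % 2 = 1) := by
  have hqi := Nat.prime_iff_prime_int.1 hq
  have h2 : ¬ (q : ℤ) ∣ 2 := by
    intro h
    have : q ∣ 2 := by exact_mod_cast h
    exact hq2 ((Nat.prime_dvd_prime_iff_eq hq Nat.prime_two).1 this)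
  exact
  { ha := by norm_num
    hb := by norm_num
    hc := hqi
    hc0 := by exact_mod_cast hq.pos
    hca := by
      intro h
      exact h2 (hqi.dvd_of_dvd_pow (n := 2) (by norm_num; exact h))
    hcb := hqi.not_dvd_one
    hh := by norm_num
    he := by norm_num
    hce := h2
    mode := Or.inl rfl
    hab := by norm_num
    good1 := by intro n k m h1 h2; omega
    good2 := by intro n k m h1 h2; omega
    good0 := by intro u v h; simp at h }

theorem L2rep {q : ℕ} (hq : q.Prime) (hq4 : q % 4 = 1) : ∃ U V : ℤ, 4 * U ^ 2 + V ^ 2 = q := by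
  have := Fact.mk hq
  obtain ⟨a, b, hab⟩ := Nat.Prime.sq_add_sq (p := q) (by omega)
  have hz : (a : ℤ) ^ 2 + (b : ℤ) ^ 2 = q := by exact_mod_cast hab
  rcases int_sq_mod2 a with ⟨h, -⟩ | h
  · obtain ⟨a', ha'⟩ := Int.dvd_of_emod_eq_zero h
    exact ⟨a', b, by rw [← hz, ha']; ring⟩
  · rcases int_sq_mod2 b with ⟨h', -⟩ | h'
    · obtain ⟨a', ha'⟩ := Int.dvd_of_emod_eq_zero h'
      exact ⟨a', a, by rw [← hz, ha']; ring⟩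
    · omega

theorem L2 {p q i j z : ℕ} (hp : p.Prime) (hq : q.Prime) (hp2 : p ≠ 2) (hpq : p ≠ q)
    (hq4 : q % 4 = 1) (hex : Exc 2 p q) (hne : ¬ (p = 11 ∧ q = 5)) (hi : 0 < i) (hj : 0 < j)
    (hz : z % 2 = 1) (h : 4 ^ i + p ^ (2 * j) = q ^ z) : z = 1 := by
  by_contra hz1
  have hq2 : q ≠ 2 := by omega
  have hM : Mode 2 p q 1 2 := ⟨Nat.prime_two, hp, hq, hp2.symm, hq2.symm, hpq,
    Or.inl ⟨rfl, rfl, by have := hq.two_le; omega, Or.inl rfl⟩⟩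
  have C := L2cfg hq hq2
  obtain ⟨U, V, hUV⟩ := L2rep hq hq4
  obtain ⟨i, rfl⟩ := Nat.exists_eq_succ_of_ne_zero hi.ne'
  have hzz : (4 : ℤ) ^ (i + 1) + (p : ℤ) ^ (2 * j) = (q : ℤ) ^ z := by exact_mod_cast h
  have h4 : (4 : ℤ) ^ (i + 1) = 4 * ((2 : ℤ) ^ i) ^ 2 := by
    rw [← pow_mul, mul_comm i 2, pow_mul]; norm_num; ring
  obtain ⟨μ, k, u, v, P, Q, hr, hk, hel, hu, hv, hS, hT⟩ := C.pow_lemma (n := z) (m := 1)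
    (u2 := (2 : ℤ) ^ i) (v2 := (p : ℤ) ^ j) (u0 := U) (v0 := V) hz
    (by rw [← hzz, h4]; ring)
    (by have := Mode.prime_not_dvd (n := i) hq Nat.prime_two hq2.symm; exact_mod_cast this) (by norm_num)
    (by rw [one_pow, one_mul, pow_one, ← hUV]; ring) (by omega)
  have hk0 : 0 < k := by
    rcases Nat.eq_zero_or_pos k with h | h
    · subst h; omega
    · exact h
  have hk2 : k % 2 = 1 := by
    rcases Nat.mod_two_eq_zero_or_one k with h | h
    · rw [← hk, Nat.mul_mod, h] at hz; simp at hz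
    · exact h
  have hpi := Nat.prime_iff_prime_int.1 hp
  by_cases hpv : (p : ℤ) ∣ v
  · obtain ⟨v', rfl⟩ := hpv
    obtain ⟨j, rfl⟩ := Nat.exists_eq_succ_of_ne_zero hj.ne'
    have e1 : ((2 : ℕ) : ℤ) ^ 2 * u ^ 2 = 4 * u ^ 2 := by norm_num
    have e2 : (p : ℤ) ^ 2 * v' ^ 2 = 1 * (p * v') ^ 2 := by ring
    have hp0 : (p : ℤ) ≠ 0 := hpi.ne_zero
    refine hM.pure_contra hex (α := 2) (β := 2) (i := i) (j := j) (k := k) (u := u) (v := v')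
      (P := P) (Q := Q) (by norm_num) (by norm_num) hk0 hr (by rw [e1, e2]; exact hel) (by exact_mod_cast hu) ?_ 
      (by rw [e1, e2]; exact hS) (by rw [e1, e2]; exact hT)
    have : (p : ℤ) * p ^ j = p * (v' * Q) := by rw [← mul_assoc, ← hv, Nat.succ_eq_add_one, pow_succ]; ring
    exact mul_left_cancel₀ hp0 this
  · obtain ⟨j', hj'⟩ := abs_pow_of_dvd hp (Dvd.intro _ hv.symm)
    have hv1 : v ^ 2 = 1 := by
      rcases Nat.eq_zero_or_pos j' with h | h
      · rw [h] at hj'; simpa using hj'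
      · exfalso
        apply hpv
        apply hpi.dvd_of_dvd_pow (n := 2)
        rw [hj', ← pow_mul]
        exact dvd_pow_self _ (by positivity)
    rw [hv1, mul_one] at hS hT hel
    simp only [one_pow, one_mul] at hS hT hel
    obtain ⟨i', hi'⟩ := abs_pow_of_dvd (a := 2) (i := i) Nat.prime_two (u := P)
      (Dvd.intro_left _ (by push_cast; exact hu.symm))
    have hP1 : P ^ 2 = 1 := by
      rcases Nat.eq_zero_or_pos i' with h | h
      · rw [h] at hi'; simpa using hi'
      · exfalso
        have t1 := (XY_ST (4 * u ^ 2) μ).1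
        have t2 := (XY_par (u ^ 2) μ).1
        have t3 : P % 2 = 1 := by rw [hS, t1]; omega
        have t4 : (2 : ℤ) ∣ P := by
          apply Int.prime_two.dvd_of_dvd_pow (n := 2)
          rw [hi', ← pow_mul]
          exact dvd_pow_self _ (by positivity)
        omega
    have hu2 : 4 * u ^ 2 = 4 ^ (i + 1) := by
      rw [h4, hu, mul_pow, hP1]; ring
    have hμ0 : 0 < μ := by
      rcases Nat.eq_zero_or_pos μ with h | h
      · subst h; norm_num at hr
      · exact h
    rcases Nat.mod_two_eq_zero_or_one μ with hm | hm
    · exact S_even hμ0 hm (by rw [← hS]; exact hP1)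
    · have g1 : 4 ^ (i + 1) + 1 = q ^ k := by
        rw [hu2] at hel; exact_mod_cast hel
      exact hne (L2b hp hq (i := i + 1) hi hj hk2 hr hm g1 (by rw [g1, ← pow_mul, hk]; exact h))

structure Ctx (p q : ℕ) : Prop where
  hp : p.Prime
  hq : q.Prime
  hp2 : p ≠ 2
  hq2 : q ≠ 2
  hpq : p ≠ q
  x1 : ¬ (p = 3 ∧ q = 5)
  x2 : ¬ (p = 3 ∧ q = 11)
  x3 : ¬ (p = 5 ∧ q = 3)
  x4 : ¬ (p = 7 ∧ q = 3)

def Sol (p q x y z : ℕ) : Prop := 0 < x ∧ 0 < y ∧ 0 < z ∧ 2 ^ x + p ^ y = q ^ z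

theorem mod3_cases {p : ℕ} (hp : p.Prime) : p = 3 ∨ p % 3 = 1 ∨ p % 3 = 2 := by
  have : p % 3 = 0 ∨ p % 3 = 1 ∨ p % 3 = 2 := by omega
  rcases this with h | h
  · left
    exact ((Nat.prime_dvd_prime_iff_eq Nat.prime_three hp).1 (Nat.dvd_of_mod_eq_zero h)).symm
  · right; exact h

theorem three_pow_mod3 {y : ℕ} (hy : 0 < y) : 3 ^ y % 3 = 0 :=
  Nat.mod_eq_zero_of_dvd (dvd_pow_self 3 hy.ne')

theorem one_pow_mod3 {p : ℕ} (y : ℕ) (h : p % 3 = 1) : p ^ y % 3 = 1 := by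
  rw [Nat.pow_mod, h]; simp

/-- residues of `q^z` mod 3 determine `q` -/
theorem pow_mod3_two {q z : ℕ} (h : q ^ z % 3 = 2) : q % 3 = 2 ∧ z % 2 = 1 := by
  have h3 : q % 3 = 0 ∨ q % 3 = 1 ∨ q % 3 = 2 := by omega
  rcases h3 with h3 | h3 | h3
  · rw [Nat.pow_mod, h3] at h
    rcases Nat.eq_zero_or_pos z with rfl | hz
    · simp at h
    · rw [zero_pow hz.ne'] at h; simp at h
  · rw [one_pow_mod3 z h3] at h; omega
  · refine ⟨h3, ?_⟩
    rcases Nat.mod_two_eq_zero_or_one z with hz | hz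
    · rw [Nat.pow_mod, h3, pow_even_mod (by norm_num) hz] at h; omega
    · exact hz

theorem pow_mod3_one {q z : ℕ} (hz : z % 2 = 1) (h : q ^ z % 3 = 1) : q % 3 = 1 := by
  have h3 : q % 3 = 0 ∨ q % 3 = 1 ∨ q % 3 = 2 := by omega
  rcases h3 with h3 | h3 | h3
  · rw [Nat.pow_mod, h3, zero_pow (by omega)] at h; simp at h
  · exact h3
  · rw [Nat.pow_mod, h3, pow_odd_mod (by norm_num) hz] at h; omega

theorem four_dvd {x : ℕ} (hx : 0 < x) (hx2 : x % 2 = 0) : 2 ^ x % 4 = 0 := by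
  obtain ⟨k, rfl⟩ := Nat.exists_eq_add_of_le (by omega : 2 ≤ x)
  rw [pow_add]; omega

theorem f_oe {p q x y z : ℕ} (C : Ctx p q) (S : Sol p q x y z) (hx : x % 2 = 1) (hy : y % 2 = 0) :
    p = 3 ∧ z % 2 = 1 ∧ q % 3 = 2 := by
  obtain ⟨hx0, hy0, hz0, h⟩ := S
  have hp3 : p = 3 := by
    by_contra hp3
    rcases lemmaC C.hp C.hq C.hp2 hp3 hy0 hz0 hx hy h with h | h
    · exact C.x3 h
    · exact C.x4 h
  subst hp3
  have h3 := three_pow_mod3 hy0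
  have h2 := two_pow_mod3 x
  have := pow_mod3_two (q := q) (z := z) (by omega)
  exact ⟨rfl, this.2, this.1⟩

theorem f_ee {p q x y z : ℕ} (C : Ctx p q) (S : Sol p q x y z) (hx : x % 2 = 0) (hy : y % 2 = 0) :
    z % 2 = 1 ∧ (p = 3 → q % 3 = 1) ∧ (p ≠ 3 → q % 3 = 2) ∧ q % 4 = 1 := by
  obtain ⟨hx0, hy0, hz0, h⟩ := S
  have h2 := two_pow_mod3 x
  have hz : z % 2 = 1 := by
    by_contra hz
    rcases lemmaA C.hp C.hq C.hq2 C.hp2 hy0 hz0 hy (by omega) h with h | h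
    · exact C.x1 h
    · exact C.x4 h
  refine ⟨hz, ?_, ?_, ?_⟩
  · rintro rfl
    have h3 := three_pow_mod3 hy0
    exact pow_mod3_one hz (by omega)
  · intro hp3
    have h3 : p ^ y % 3 = 1 := by
      rcases mod3_cases C.hp with h | h | h
      · exact absurd h hp3
      · exact one_pow_mod3 y h
      · rw [Nat.pow_mod, h]; exact pow_even_mod (by norm_num) hy
    exact (pow_mod3_two (q := q) (z := z) (by omega)).1
  · have h8 := sq_mod8 (C.hp.odd_of_ne_two C.hp2) hy
    have h8' := odd_mod8 (C.hq.odd_of_ne_two C.hq2) hz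
    have := four_dvd hx0 hx
    omega

theorem f_eo {p q x y z : ℕ} (C : Ctx p q) (S : Sol p q x y z) (hx : x % 2 = 0) (hy : y % 2 = 1) :
    (p = 3 → q % 3 = 1 ∧ q % 4 = 3) ∧ (p % 3 = 2 → q = 3) ∧ (p % 3 = 1 → q % 3 = 2) := by
  obtain ⟨hx0, hy0, hz0, h⟩ := S
  have h2 := two_pow_mod3 x
  refine ⟨?_, ?_, ?_⟩
  · rintro rfl
    have hz : z % 2 = 1 := by
      by_contra hz
      rcases lemmaB C.hp C.hq C.hpq C.hp2 hx0 hz0 hx hy (by omega) h with h | h <;> omega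
    have h3 := three_pow_mod3 hy0
    have h8 : 3 ^ y % 8 = 3 := odd_mod8 (by decide) hy
    have h8' := odd_mod8 (C.hq.odd_of_ne_two C.hq2) hz
    have := four_dvd hx0 hx
    exact ⟨pow_mod3_one hz (by omega), by omega⟩
  · intro hp
    have h3 : p ^ y % 3 = 2 := by
      rw [Nat.pow_mod, hp]; exact pow_odd_mod (by norm_num) hy
    exact prime_eq_of_dvd_pow Nat.prime_three C.hq (n := z) (by omega)
  · intro hp
    have h3 := one_pow_mod3 y hp
    exact (pow_mod3_two (q := q) (z := z) (by omega)).1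

theorem f_oo {p q x y z : ℕ} (C : Ctx p q) (S : Sol p q x y z) (hx : x % 2 = 1) (hy : y % 2 = 1) :
    (p = 3 → q % 3 = 2 ∧ z % 2 = 1) ∧ (p % 3 = 2 → q ≠ 3) ∧ (p % 3 = 1 → q = 3) := by
  obtain ⟨hx0, hy0, hz0, h⟩ := S
  have h2 := two_pow_mod3 x
  refine ⟨?_, ?_, ?_⟩
  · rintro rfl
    have h3 := three_pow_mod3 hy0
    exact pow_mod3_two (q := q) (z := z) (by omega)
  · rintro hp rfl
    have h3 : p ^ y % 3 = 2 := by
      rw [Nat.pow_mod, hp]; exact pow_odd_mod (by norm_num) hy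
    have h4 := three_pow_mod3 hz0
    omega
  · intro hp
    have h3 := one_pow_mod3 y hp
    exact prime_eq_of_dvd_pow Nat.prime_three C.hq (n := z) (by omega)

theorem Ctx.mode {p q : ℕ} (C : Ctx p q) : Mode 2 p q 1 2 :=
  ⟨Nat.prime_two, C.hp, C.hq, C.hp2.symm, C.hq2.symm, C.hpq,
    Or.inl ⟨rfl, rfl, by have := C.hq.two_le; have := C.hq2; omega, Or.inl rfl⟩⟩

theorem Ctx.exc {p q : ℕ} (C : Ctx p q) : Exc 2 p q := by
  have := C.x2
  have := C.hq2
  constructor <;> omega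

theorem pair_cases {p q x y z x' y' z' : ℕ} (C : Ctx p q) (S : Sol p q x y z)
    (S' : Sol p q x' y' z') (hne : ¬ (x = x' ∧ y = y' ∧ z = z')) :
    (x % 2 = 0 ∧ y % 2 = 0 ∧ y' % 2 = 1) ∨ (x' % 2 = 0 ∧ y' % 2 = 0 ∧ y % 2 = 1) := by
  have hsame : ¬ (x % 2 = x' % 2 ∧ y % 2 = y' % 2) := by
    rintro ⟨h1, h2⟩
    apply hne
    have e1 : ((2 : ℕ) : ℤ) ^ x + (p : ℤ) ^ y = 1 ^ 2 * (q : ℤ) ^ z := by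
      rw [one_pow, one_mul]; exact_mod_cast S.2.2.2
    have e2 : ((2 : ℕ) : ℤ) ^ x' + (p : ℤ) ^ y' = 1 ^ 2 * (q : ℤ) ^ z' := by
      rw [one_pow, one_mul]; exact_mod_cast S'.2.2.2
    exact C.mode.class_unique C.exc S.1 S.2.1 S'.1 S'.2.1 S.2.2.1 S'.2.2.1 h1 h2 e1 e2
  -- (o,e) against everything
  have hoe : ∀ {x y z x' y' z' : ℕ}, Sol p q x y z → Sol p q x' y' z' →
      x % 2 = 1 → y % 2 = 0 → ¬ (x' % 2 = 1 ∧ y' % 2 = 0) → False := by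
    intro x y z x' y' z' S S' hx hy hn
    obtain ⟨hp3, hz, hq⟩ := f_oe C S hx hy
    subst hp3
    rcases Nat.mod_two_eq_zero_or_one x' with hx' | hx' <;>
      rcases Nat.mod_two_eq_zero_or_one y' with hy' | hy'
    · have := (f_ee C S' hx' hy').2.1 rfl; omega
    · have := ((f_eo C S' hx' hy').1 rfl).1; omega
    · exact hn ⟨hx', hy'⟩
    · have := ((f_oo C S' hx' hy').1 rfl)
      exact E3 C.hq C.hq2 C.hpq.symm (fun h => C.x2 ⟨rfl, h⟩) hx S.2.1 hy hz hx' hy' this.2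
        S.2.2.2 S'.2.2.2
  have hodd : ∀ {x y z x' y' z' : ℕ}, Sol p q x y z → Sol p q x' y' z' →
      x % 2 = 0 → y % 2 = 1 → x' % 2 = 1 → y' % 2 = 1 → False := by
    intro x y z x' y' z' S S' hx hy hx' hy'
    have h1 := f_eo C S hx hy
    have h2 := f_oo C S' hx' hy'
    rcases mod3_cases C.hp with h | h | h
    · have := h1.1 h; have := h2.1 h; omega
    · have := h1.2.2 h; have := h2.2.2 h; omega
    · exact h2.2.1 h (h1.2.1 h)
  rcases Nat.mod_two_eq_zero_or_one x with hx | hx <;>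
    rcases Nat.mod_two_eq_zero_or_one y with hy | hy <;>
    rcases Nat.mod_two_eq_zero_or_one x' with hx' | hx' <;>
    rcases Nat.mod_two_eq_zero_or_one y' with hy' | hy'
  all_goals first
    | (exfalso; exact hsame ⟨by omega, by omega⟩)
    | (left; exact ⟨hx, hy, hy'⟩)
    | (right; exact ⟨hx', hy', hy⟩)
    | (exfalso; exact hoe S S' hx hy (by omega))
    | (exfalso; exact hoe S' S hx' hy' (by omega))
    | (exfalso; exact hodd S S' hx hy hx' hy')
    | (exfalso; exact hodd S' S hx' hy' hx hy)

theorem pair_concl {p q x y z x' y' z' : ℕ} (C : Ctx p q) (S : Sol p q x y z)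
    (S' : Sol p q x' y' z') (hx : x % 2 = 0) (hy : y % 2 = 0) (hy' : y' % 2 = 1) :
    q % 12 = 5 ∧ z = 1 := by
  obtain ⟨hz, e1, e2, e3⟩ := f_ee C S hx hy
  have hp3 : p ≠ 3 := by
    intro hp3
    have := e1 hp3
    rcases Nat.mod_two_eq_zero_or_one x' with hx' | hx'
    · have := (f_eo C S' hx' hy').1 hp3; omega
    · have := (f_oo C S' hx' hy').1 hp3; omega
  have := e2 hp3
  refine ⟨by omega, ?_⟩
  have hne : ¬ (p = 11 ∧ q = 5) := by
    rintro ⟨rfl, rfl⟩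
    rcases Nat.mod_two_eq_zero_or_one x' with hx' | hx'
    · have := (f_eo C S' hx' hy').2.1 (by norm_num); omega
    · obtain ⟨-, -, hz0, h⟩ := S'
      have t1 : 11 ^ y' % 5 = 1 := by rw [Nat.pow_mod]; norm_num
      have t2 : 5 ^ z' % 5 = 0 := Nat.mod_eq_zero_of_dvd (dvd_pow_self 5 hz0.ne')
      have t3 := pow_per (a := 2) (T := 4) (m := 5) x' (by norm_num)
      have t4 : x' % 4 = 1 ∨ x' % 4 = 3 := by omega
      rcases t4 with t4 | t4 <;> rw [t4] at t3 <;> norm_num at t3 <;> omega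
  obtain ⟨hx0, hy0, -, h⟩ := S
  obtain ⟨i, rfl⟩ : ∃ i, x = 2 * i := ⟨x / 2, by omega⟩
  obtain ⟨j, rfl⟩ : ∃ i, y = 2 * i := ⟨y / 2, by omega⟩
  refine L2 C.hp C.hq C.hp2 C.hpq e3 C.exc hne (i := i) (j := j) (by omega) (by omega) hz ?_
  rw [← h, pow_mul 2 2 i]; norm_num

/-- Theorem 1.4: For distinct primes `a < b < c` (well, `a < b`) with more than one
solution of `a^x + b^y = c^z` and `(a,b,c)` not an exceptional triple,
`c ≡ 5 mod 12` and there are exactly two solutions with the stated parity properties. -/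
theorem stmt_1 (a b c : ℕ) (ha : Nat.Prime a) (hb : Nat.Prime b) (hc : Nat.Prime c)
    (hab : a < b) (hac : a ≠ c) (hbc : b ≠ c)
    (hmany : ∃ s t : ℕ × ℕ × ℕ, s ≠ t ∧
        (0 < s.1 ∧ 0 < s.2.1 ∧ 0 < s.2.2 ∧ a ^ s.1 + b ^ s.2.1 = c ^ s.2.2) ∧
        (0 < t.1 ∧ 0 < t.2.1 ∧ 0 < t.2.2 ∧ a ^ t.1 + b ^ t.2.1 = c ^ t.2.2))
    (hexc : (a, b, c) ≠ (2, 3, 5) ∧ (a, b, c) ≠ (2, 3, 11) ∧ (a, b, c) ≠ (2, 5, 3) ∧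
        (a, b, c) ≠ (2, 7, 3) ∧ (a, b, c) ≠ (3, 5, 2) ∧ (a, b, c) ≠ (3, 13, 2)) :
    c % 12 = 5 ∧
    (∃ x₁ y₁ z₁ x₂ y₂ z₂ : ℕ,
        (0 < x₁ ∧ 0 < y₁ ∧ 0 < z₁ ∧ a ^ x₁ + b ^ y₁ = c ^ z₁) ∧
        (0 < x₂ ∧ 0 < y₂ ∧ 0 < z₂ ∧ a ^ x₂ + b ^ y₂ = c ^ z₂) ∧
        (x₁, y₁, z₁) ≠ (x₂, y₂, z₂) ∧
        (∀ x y z : ℕ, 0 < x → 0 < y → 0 < z → a ^ x + b ^ y = c ^ z →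
          (x, y, z) = (x₁, y₁, z₁) ∨ (x, y, z) = (x₂, y₂, z₂)) ∧
        2 ∣ x₁ ∧ 2 ∣ y₁ ∧ z₁ = 1 ∧ ¬ (2 ∣ y₂)) := by
  obtain ⟨⟨x, y, z⟩, ⟨x', y', z'⟩, hne, ⟨hx, hy, hz, h⟩, ⟨hx', hy', hz', h'⟩⟩ := hmany
  obtain ⟨n1, n2, n3, n4, n5, n6⟩ := hexc
  simp only [ne_eq, Prod.mk.injEq] at hne n1 n2 n3 n4 n5 n6
  simp only at hx hy hz h hx' hy' hz' h'
  have hb2 : b ≠ 2 := by have := ha.two_le; omega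
  by_cases hc2 : c = 2
  · exfalso
    subst hc2
    exact hne (case_two ha hb hab.ne hac hb2
      (by constructor <;> omega) hx hy hx' hy' h h')
  by_cases ha2 : a = 2
  · subst ha2
    have C : Ctx b c := ⟨hb, hc, hb2, hc2, hbc, by omega, by omega, by omega, by omega⟩
    have fin : ∀ {x y z x' y' z' : ℕ}, Sol b c x y z → Sol b c x' y' z' →
        x % 2 = 0 → y % 2 = 0 → y' % 2 = 1 → c % 12 = 5 ∧
        (∃ x₁ y₁ z₁ x₂ y₂ z₂ : ℕ,
          (0 < x₁ ∧ 0 < y₁ ∧ 0 < z₁ ∧ 2 ^ x₁ + b ^ y₁ = c ^ z₁) ∧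
          (0 < x₂ ∧ 0 < y₂ ∧ 0 < z₂ ∧ 2 ^ x₂ + b ^ y₂ = c ^ z₂) ∧
          (x₁, y₁, z₁) ≠ (x₂, y₂, z₂) ∧
          (∀ x y z : ℕ, 0 < x → 0 < y → 0 < z → 2 ^ x + b ^ y = c ^ z →
            (x, y, z) = (x₁, y₁, z₁) ∨ (x, y, z) = (x₂, y₂, z₂)) ∧
          2 ∣ x₁ ∧ 2 ∣ y₁ ∧ z₁ = 1 ∧ ¬ (2 ∣ y₂)) := by
      intro x y z x' y' z' S S' p1 p2 p3
      obtain ⟨q1, q2⟩ := pair_concl C S S' p1 p2 p3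
      refine ⟨q1, x, y, z, x', y', z', S, S', ?_, ?_, by omega, by omega, q2, by omega⟩
      · simp only [ne_eq, Prod.mk.injEq]; omega
      · intro u v w hu hv hw huv
        simp only [Prod.mk.injEq]
        by_contra hcon
        push Not at hcon
        have SU : Sol b c u v w := ⟨hu, hv, hw, huv⟩
        have r1 := pair_cases C SU S (by intro hh; exact hcon.1 hh.1 hh.2.1 hh.2.2)
        have r2 := pair_cases C SU S' (by intro hh; exact hcon.2 hh.1 hh.2.1 hh.2.2)
        omega
    have S : Sol b c x y z := ⟨hx, hy, hz, h⟩
    have S' : Sol b c x' y' z' := ⟨hx', hy', hz', h'⟩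
    rcases pair_cases C S S' hne with ⟨r1, r2, r3⟩ | ⟨r1, r2, r3⟩
    · exact fin S S' r1 r2 r3
    · exact fin S' S r1 r2 r3
  · exfalso
    have o1 : Odd (a ^ x) := (ha.odd_of_ne_two ha2).pow
    have o2 : Odd (b ^ y) := (hb.odd_of_ne_two hb2).pow
    have o3 : Odd (c ^ z) := (hc.odd_of_ne_two hc2).pow
    rw [Nat.odd_iff] at o1 o2 o3
    omega
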